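/- arXiv:1306.3841 — 2 statements merged into one kernel-verified Lean document; each statement's English description precedes it below -/
import Mathlib

section
/- Let d ≥ 2 and let E⁽¹⁾,…,E⁽ᵈ⁾ be independent one-dimensional fractal percolations with common scale M ≥ 2 and probabilities p₁,…,p_d satisfying p_i > M^{-1} for all i and p₁·p₂·⋯·p_d > M^{-(d−1)}. Then for every vector a = (a₁,…,a_d) ∈ ℝ^d with a_i ≠ 0 for all i, the algebraic sum a₁E⁽¹⁾ + a₂E⁽²⁾ + ⋯ + a_dE⁽ᵈ⁾ = { Σ_{i=1}^d a_i e_i : e_i ∈ E⁽ⁱ⁾ } contains a nonempty open interval, almost surely conditioned on the event that all E⁽ⁱ⁾ are nonempty. -/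
open MeasureTheory Set ENNReal ProbabilityTheory Real

noncomputable section

/-- The alphabet indexing the `M^d` subcubes of a cube in `[0,1]^d`. -/
abbrev Alpha (d M : ℕ) : Type := Fin d → Fin M

/-- Finite nonempty words over the alphabet; they index `M`-adic cubes. -/
abbrev Word (d M : ℕ) : Type := {w : List (Alpha d M) // w ≠ []}

/-- The sample space: `{0,1}`-labelings of all finite nonempty words. -/
abbrev PercSpace (d M : ℕ) : Type := Word d M → Bool

/-- `P` is the product measure making the labels i.i.d. Bernoulli(`p`). -/
def IsBernoulliPerc (d M : ℕ) (p : ℝ) (P : Measure (PercSpace d M)) : Prop :=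
  IsProbabilityMeasure P ∧
    ∀ (S : Finset (Word d M)) (b : Word d M → Bool),
      P {ω | ∀ w ∈ S, ω w = b w} =
        ∏ w ∈ S, if b w then ENNReal.ofReal p else ENNReal.ofReal (1 - p)

/-- A level-`w.length` cube is retained iff its word and every nonempty prefix
of its word carry label 1. -/
def Retained (d M : ℕ) (ω : PercSpace d M) (w : List (Alpha d M)) : Prop :=
  ∀ (u : List (Alpha d M)) (hu : u ≠ []), u <+: w → ω ⟨u, hu⟩ = true

/-- The `i`-th coordinate of the lower-left corner of the cube indexed by `w`. -/
def wordBase (d M : ℕ) (w : List (Alpha d M)) (i : Fin d) : ℝ :=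
  ∑ j : Fin w.length, ((w.get j) i : ℝ) * (M : ℝ) ^ (-(j : ℤ) - 1)

/-- The closed `M`-adic cube of level `w.length` indexed by the word `w`. -/
def wordCube (d M : ℕ) (w : List (Alpha d M)) : Set (EuclideanSpace ℝ (Fin d)) :=
  {x | ∀ i, wordBase d M w i ≤ x i ∧ x i ≤ wordBase d M w i + (M : ℝ) ^ (-(w.length : ℤ))}

/-- `E_n`, the union of the retained level-`n` cubes. -/
def approx (d M : ℕ) (ω : PercSpace d M) (n : ℕ) : Set (EuclideanSpace ℝ (Fin d)) :=
  ⋃ w ∈ {w : List (Alpha d M) | w.length = n ∧ Retained d M ω w}, wordCube d M w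

/-- The fractal percolation set `E = ⋂_{n ≥ 1} E_n`. -/
def percLimit (d M : ℕ) (ω : PercSpace d M) : Set (EuclideanSpace ℝ (Fin d)) :=
  ⋂ n ∈ {n : ℕ | 1 ≤ n}, approx d M ω n

/-- Words indexing `M`-adic subintervals of `[0,1]`. -/
abbrev Word1 (M : ℕ) : Type := {w : List (Fin M) // w ≠ []}

/-- Sample space of a one-dimensional fractal percolation. -/
abbrev Perc1 (M : ℕ) : Type := Word1 M → Bool

/-- `P` is the joint distribution of `d` independent one-dimensional fractal
percolations with probabilities `p i`: all labels are independent, and the labels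
of the `i`-th percolation are Bernoulli(`p i`). -/
def IsIndepBernoulli1 (d M : ℕ) (p : Fin d → ℝ) (P : Measure (Fin d → Perc1 M)) : Prop :=
  IsProbabilityMeasure P ∧
    ∀ (S : Finset (Fin d × Word1 M)) (b : Fin d × Word1 M → Bool),
      P {ω | ∀ q ∈ S, ω q.1 q.2 = b q} =
        ∏ q ∈ S, if b q then ENNReal.ofReal (p q.1) else ENNReal.ofReal (1 - p q.1)

/-- A level-`w.length` interval is retained iff its word and every nonempty
prefix of its word carry label 1. -/
def Retained1 (M : ℕ) (ω : Perc1 M) (w : List (Fin M)) : Prop :=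
  ∀ (u : List (Fin M)) (hu : u ≠ []), u <+: w → ω ⟨u, hu⟩ = true

/-- Left endpoint of the `M`-adic interval indexed by the word `w`. -/
def base1 (M : ℕ) (w : List (Fin M)) : ℝ :=
  ∑ j : Fin w.length, (w.get j : ℝ) * (M : ℝ) ^ (-(j : ℤ) - 1)

/-- The closed `M`-adic interval of level `w.length` indexed by `w`. -/
def interval1 (M : ℕ) (w : List (Fin M)) : Set ℝ :=
  Icc (base1 M w) (base1 M w + (M : ℝ) ^ (-(w.length : ℤ)))

/-- `E_n`, the union of the retained level-`n` intervals. -/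
def approx1 (M : ℕ) (ω : Perc1 M) (n : ℕ) : Set ℝ :=
  ⋃ w ∈ {w : List (Fin M) | w.length = n ∧ Retained1 M ω w}, interval1 M w

/-- The one-dimensional fractal percolation set `E = ⋂_{n ≥ 1} E_n`. -/
def limit1 (M : ℕ) (ω : Perc1 M) : Set ℝ :=
  ⋂ n ∈ {n : ℕ | 1 ≤ n}, approx1 M ω n

set_option linter.unusedSectionVars false
section prob
variable {Q : Type*}

/-- Cylinder formula for independent Bernoulli labels. -/
def IsBern (pr : Q → ℝ) (P : Measure (Q → Bool)) : Prop :=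
  ∀ (S : Finset Q) (b : Q → Bool), P {ω | ∀ q ∈ S, ω q = b q} =
    ∏ q ∈ S, if b q then ENNReal.ofReal (pr q) else ENNReal.ofReal (1 - pr q)

/-- The collection of cylinders. -/
def cyls (Q : Type*) : Set (Set (Q → Bool)) :=
  {A | ∃ (S : Finset Q) (b : Q → Bool), A = {ω | ∀ q ∈ S, ω q = b q}}

lemma cyls_pi : IsPiSystem (cyls Q) := by
  classical
  rintro A ⟨S, b, rfl⟩ B ⟨S', b', rfl⟩ ⟨ω0, h0, h0'⟩
  refine ⟨S ∪ S', ω0, ?_⟩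
  ext ω
  simp only [Set.mem_inter_iff, Set.mem_ofPred_eq, Finset.mem_union] at *
  constructor
  · rintro ⟨h1, h2⟩ q (hq | hq)
    · rw [h1 q hq, h0 q hq]
    · rw [h2 q hq, h0' q hq]
  · intro h
    exact ⟨fun q hq => by rw [h q (Or.inl hq), h0 q hq], fun q hq => by rw [h q (Or.inr hq), h0' q hq]⟩

lemma cyls_gen : (MeasurableSpace.pi : MeasurableSpace (Q → Bool)) =
    MeasurableSpace.generateFrom (cyls Q) := by
  apply le_antisymm
  · refine iSup_le fun q => ?_
    rw [← measurable_iff_comap_le]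
    refine @measurable_to_bool _ (MeasurableSpace.generateFrom (cyls Q)) _ ?_
    refine MeasurableSpace.measurableSet_generateFrom ⟨{q}, fun _ => true, ?_⟩
    ext ω; simp
  · refine MeasurableSpace.generateFrom_le ?_
    rintro A ⟨S, b, rfl⟩
    have : {ω : Q → Bool | ∀ q ∈ S, ω q = b q} = ⋂ q ∈ S, {ω | ω q = b q} := by ext; simp
    rw [this]
    refine Finset.measurableSet_biInter _ fun q _ => ?_
    exact measurableSet_eq_fun (measurable_pi_apply q) measurable_const

variable [DecidableEq Q]

lemma measurable_upd (q : Q) (b : Bool) :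
    Measurable (fun ω : Q → Bool => Function.update ω q b) := by
  refine measurable_pi_iff.2 fun r => ?_
  by_cases h : r = q
  · subst h; simp
  · simp only [Function.update_of_ne h]; exact measurable_pi_apply r

variable {pr : Q → ℝ} {P : Measure (Q → Bool)} [IsProbabilityMeasure P]

lemma resample_measure (hP : IsBern pr P) (h0 : ∀ q, 0 ≤ pr q) (h1 : ∀ q, pr q ≤ 1) (q : Q) :
    P = ENNReal.ofReal (pr q) • P.map (fun ω => Function.update ω q true)
      + ENNReal.ofReal (1 - pr q) • P.map (fun ω => Function.update ω q false) := by
  have hsum : ENNReal.ofReal (pr q) + ENNReal.ofReal (1 - pr q) = 1 := by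
    rw [← ENNReal.ofReal_add (h0 q) (by linarith [h1 q])]; simp
  refine ext_of_generate_finite (cyls Q) cyls_gen cyls_pi ?_ ?_
  · rintro A ⟨S, b, rfl⟩
    have hA : MeasurableSet {ω : Q → Bool | ∀ q ∈ S, ω q = b q} := by
      rw [cyls_gen]; exact MeasurableSpace.measurableSet_generateFrom ⟨S, b, rfl⟩
    simp only [Measure.add_apply, Measure.smul_apply, smul_eq_mul]
    rw [Measure.map_apply (measurable_upd q true) hA, Measure.map_apply (measurable_upd q false) hA]
    by_cases hq : q ∈ S
    · have key : ∀ c : Bool, (fun ω : Q → Bool => Function.update ω q c) ⁻¹'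
          {ω | ∀ q ∈ S, ω q = b q} =
          if b q = c then {ω | ∀ r ∈ S.erase q, ω r = b r} else ∅ := by
        intro c
        split_ifs with hc
        · ext ω
          simp only [Set.mem_preimage, Set.mem_ofPred_eq, Finset.mem_erase]
          constructor
          · rintro h r ⟨hr, hrS⟩
            have := h r hrS
            rwa [Function.update_of_ne hr] at this
          · intro h r hr
            by_cases hrq : r = q
            · subst hrq; simp [hc]
            · rw [Function.update_of_ne hrq]; exact h r ⟨hrq, hr⟩
        · ext ω
          simp only [Set.mem_preimage, Set.mem_ofPred_eq, Set.mem_empty_iff_false, iff_false]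
          intro h
          have := h q hq
          simp at this
          exact hc this.symm
      rw [key, key, hP, ← Finset.mul_prod_erase S _ hq]
      cases hb : b q
      · rw [← hP]; simp
      · rw [← hP]; simp
    · have key : ∀ c : Bool, (fun ω : Q → Bool => Function.update ω q c) ⁻¹'
          {ω | ∀ q ∈ S, ω q = b q} = {ω | ∀ q ∈ S, ω q = b q} := by
        intro c
        ext ω
        simp only [Set.mem_preimage, Set.mem_ofPred_eq]
        refine forall₂_congr fun r hr => ?_
        rw [Function.update_of_ne (by rintro rfl; exact hq hr)]
      rw [key, key, ← add_mul, hsum, one_mul]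
  · simp only [Measure.add_apply, Measure.smul_apply, smul_eq_mul]
    rw [Measure.map_apply (measurable_upd q true) MeasurableSet.univ,
      Measure.map_apply (measurable_upd q false) MeasurableSet.univ]
    simp [hsum]

lemma resample_lintegral (hP : IsBern pr P) (h0 : ∀ q, 0 ≤ pr q) (h1 : ∀ q, pr q ≤ 1) (q : Q)
    {F : (Q → Bool) → ℝ≥0∞} (hF : Measurable F) :
    ∫⁻ ω, F ω ∂P = ∫⁻ ω, (ENNReal.ofReal (pr q) * F (Function.update ω q true)
      + ENNReal.ofReal (1 - pr q) * F (Function.update ω q false)) ∂P := by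
  have hm : ∀ b, Measurable fun ω => F (Function.update ω q b) :=
    fun b => hF.comp (measurable_upd q b)
  rw [lintegral_add_left ((hm true).const_mul _), lintegral_const_mul _ (hm true),
    lintegral_const_mul _ (hm false)]
  conv_lhs => rw [resample_measure hP h0 h1 q]
  rw [lintegral_add_measure, lintegral_smul_measure, lintegral_smul_measure,
    lintegral_map hF (measurable_upd q true), lintegral_map hF (measurable_upd q false)]
  simp

/-- Integrating out the labels in a finite set `T` when the rest does not depend on `T`. -/
lemma integrate_out (hP : IsBern pr P) (h0 : ∀ q, 0 ≤ pr q) (h1 : ∀ q, pr q ≤ 1) (T : Finset Q)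
    (F : Q → Bool → (Q → Bool) → ℝ≥0∞) (hF : ∀ q b, Measurable (F q b))
    (hdep : ∀ q ∈ T, ∀ b, DependsOn (F q b) (↑T)ᶜ) :
    ∫⁻ ω, ∏ q ∈ T, F q (ω q) ω ∂P =
      ∫⁻ ω, ∏ q ∈ T, (ENNReal.ofReal (pr q) * F q true ω
        + ENNReal.ofReal (1 - pr q) * F q false ω) ∂P := by
  have hFm : ∀ q, Measurable fun ω : Q → Bool => F q (ω q) ω := by
    intro q
    have : (fun ω : Q → Bool => F q (ω q) ω) =
        fun ω => if ω q = true then F q true ω else F q false ω := by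
      funext ω; cases ω q <;> simp
    rw [this]
    exact Measurable.ite (measurableSet_eq_fun (measurable_pi_apply q) measurable_const) (hF q _) (hF q _)
  have upd : ∀ q ∈ T, ∀ r ∈ T, ∀ b c ω, F q b (Function.update ω r c) = F q b ω := by
    intro q hq r hr b c ω
    refine hdep q hq b ?_
    intro x hx
    rw [Function.update_of_ne]
    rintro rfl
    exact hx hr
  have main : ∀ U ⊆ T, ∫⁻ ω, ∏ q ∈ T, F q (ω q) ω ∂P =
      ∫⁻ ω, (∏ q ∈ U, (ENNReal.ofReal (pr q) * F q true ω
        + ENNReal.ofReal (1 - pr q) * F q false ω)) * ∏ q ∈ T \ U, F q (ω q) ω ∂P := by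
    intro U
    induction U using Finset.induction_on with
    | empty => intro _; simp
    | insert r U hr ih =>
      intro hU
      have hrT : r ∈ T := hU (Finset.mem_insert_self _ _)
      have hUT : U ⊆ T := fun x hx => hU (Finset.mem_insert_of_mem hx)
      rw [ih hUT, resample_lintegral hP h0 h1 r]
      · refine lintegral_congr fun ω => ?_
        have e1 : ∀ c, ∏ q ∈ U, (ENNReal.ofReal (pr q) * F q true (Function.update ω r c)
            + ENNReal.ofReal (1 - pr q) * F q false (Function.update ω r c)) =
            ∏ q ∈ U, (ENNReal.ofReal (pr q) * F q true ω
            + ENNReal.ofReal (1 - pr q) * F q false ω) := by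
          intro c
          refine Finset.prod_congr rfl fun q hq => ?_
          rw [upd q (hUT hq) r hrT, upd q (hUT hq) r hrT]
        have e2 : T \ U = insert r (T \ insert r U) := by
          ext x; simp only [Finset.mem_sdiff, Finset.mem_insert]
          by_cases hx : x = r
          · subst hx; simp [hrT, hr]
          · simp [hx]
        have e3 : ∀ c, ∏ q ∈ T \ U, F q (Function.update ω r c q) (Function.update ω r c) =
            F r c ω * ∏ q ∈ T \ insert r U, F q (ω q) ω := by
          intro c
          rw [e2, Finset.prod_insert (by simp), Function.update_self, upd r hrT r hrT]
          congr 1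
          refine Finset.prod_congr rfl fun q hq => ?_
          rw [upd q (Finset.mem_sdiff.1 hq).1 r hrT, Function.update_of_ne]
          rintro rfl
          simp at hq
        rw [e1, e1, e3, e3, Finset.prod_insert hr]
        ring
      · refine Measurable.mul ?_ ?_
        · refine Finset.measurable_prod _ fun q _ => ?_
          exact ((hF q _).const_mul _).add ((hF q _).const_mul _)
        · exact Finset.measurable_prod _ fun q _ => hFm q
  rw [main T subset_rfl]
  simp

lemma exp_le_add_exp_sq (y : ℝ) : Real.exp y ≤ y + Real.exp (y ^ 2) := by
  have h2 := Real.add_one_le_exp (y ^ 2)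
  rcases le_total |y| 1 with h | h
  · have h3 := Real.abs_exp_sub_one_sub_id_le h
    have := (abs_le.1 h3).2
    linarith
  · rcases le_total 0 y with h' | h'
    · rw [abs_of_nonneg h'] at h
      have : Real.exp y ≤ Real.exp (y ^ 2) := Real.exp_le_exp.2 (by nlinarith)
      linarith
    · rw [abs_of_nonpos h'] at h
      have : Real.exp y ≤ 1 := Real.exp_le_one_iff.2 h'
      nlinarith

/-- centred normalized label -/
def eta (pr : Q → ℝ) (q : Q) (b : Bool) : ℝ := (if b then (pr q)⁻¹ else 0) - 1

lemma mgf_bound {K : ℝ} (h0 : ∀ q, 0 < pr q) (h1 : ∀ q, pr q ≤ 1)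
    (hK : ∀ q, (pr q)⁻¹ ≤ K) (q : Q) (x : ℝ) :
    pr q * Real.exp (x * eta pr q true - K ^ 2 * x ^ 2)
      + (1 - pr q) * Real.exp (x * eta pr q false - K ^ 2 * x ^ 2) ≤ 1 := by
  have hK1 : 1 ≤ K := le_trans (one_le_inv_iff₀.2 ⟨h0 q, h1 q⟩) (hK q)
  have hi : 1 ≤ (pr q)⁻¹ := (one_le_inv_iff₀.2 ⟨h0 q, h1 q⟩)
  have hb : ∀ b, (eta pr q b) ^ 2 ≤ K ^ 2 := by
    intro b
    apply sq_le_sq'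
    · unfold eta; split_ifs <;> linarith [hK q]
    · unfold eta; split_ifs <;> linarith [hK q]
  have hm : pr q * eta pr q true + (1 - pr q) * eta pr q false = 0 := by
    unfold eta
    have := (h0 q).ne'
    simp; field_simp; ring
  have hE : ∀ b, Real.exp (x * eta pr q b) ≤ x * eta pr q b + Real.exp (K ^ 2 * x ^ 2) := by
    intro b
    refine (exp_le_add_exp_sq _).trans ?_
    gcongr
    rw [mul_pow, mul_comm]
    exact mul_le_mul_of_nonneg_right (hb b) (sq_nonneg x)
  rw [Real.exp_sub, Real.exp_sub]
  have hpos := Real.exp_pos (K ^ 2 * x ^ 2)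
  rw [mul_div_assoc', mul_div_assoc', ← add_div, div_le_one hpos]
  have a1 := mul_le_mul_of_nonneg_left (hE true) (h0 q).le
  have a2 := mul_le_mul_of_nonneg_left (hE false) (sub_nonneg.2 (h1 q))
  have e : x * (pr q * eta pr q true + (1 - pr q) * eta pr q false) = 0 := by rw [hm, mul_zero]
  nlinarith

lemma measurable_of_dependsOn {β : Type*} [MeasurableSpace β] [Nonempty β]
    {f : (Q → Bool) → β} {s : Set Q} (hs : s.Finite)
    (hf : DependsOn f s) : Measurable f := by
  obtain ⟨g, rfl⟩ := dependsOn_iff_exists_comp.1 hf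
  have := hs.to_subtype
  refine (measurable_of_finite g).comp ?_
  exact measurable_pi_iff.2 fun q => measurable_pi_apply _

/-- one-sided exponential deviation bound -/
lemma dev_one {K : ℝ} (hP : IsBern pr P) (h0 : ∀ q, 0 < pr q) (h1 : ∀ q, pr q ≤ 1)
    (hK : ∀ q, (pr q)⁻¹ ≤ K) (T : Finset Q) (c : Q → (Q → Bool) → ℝ)
    (hc : ∀ q, Measurable (c q)) (hdep : ∀ q ∈ T, DependsOn (c q) (↑T)ᶜ) (lam s : ℝ) (hl : 0 < lam) :
    P {ω | K ^ 2 * lam * (∑ q ∈ T, c q ω ^ 2) + s ≤ ∑ q ∈ T, eta pr q (ω q) * c q ω} ≤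
      ENNReal.ofReal (Real.exp (-(lam * s))) := by
  set F : Q → Bool → (Q → Bool) → ℝ≥0∞ := fun q b ω =>
    ENNReal.ofReal (Real.exp ((lam * c q ω) * eta pr q b - K ^ 2 * (lam * c q ω) ^ 2)) with hFdef
  have hF : ∀ q b, Measurable (F q b) := by
    intro q b
    have := hc q
    simp only [hFdef]
    fun_prop
  have hI : ∫⁻ ω, ∏ q ∈ T, F q (ω q) ω ∂P ≤ 1 := by
    rw [integrate_out hP (fun q => (h0 q).le) h1 T F hF]
    · calc _ ≤ ∫⁻ ω, 1 ∂P := by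
            refine lintegral_mono fun ω => Finset.prod_le_one' fun q hq => ?_
            simp only [hFdef]
            rw [← ENNReal.ofReal_mul (h0 q).le, ← ENNReal.ofReal_mul (sub_nonneg.2 (h1 q)),
              ← ENNReal.ofReal_add (mul_nonneg (h0 q).le (Real.exp_pos _).le)
              (mul_nonneg (sub_nonneg.2 (h1 q)) (Real.exp_pos _).le)]
            exact ENNReal.ofReal_le_one.2 (mgf_bound h0 h1 hK q _)
        _ = 1 := by simp
    · intro q hq b x y hxy
      simp only [hFdef]
      rw [hdep q hq hxy]
  have hm : Measurable fun ω : Q → Bool => ∑ q ∈ T, eta pr q (ω q) * c q ω := by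
    refine Finset.measurable_sum _ fun q _ => Measurable.mul ?_ (hc q)
    exact (measurable_of_finite (eta pr q)).comp (measurable_pi_apply q)
  have hprod : ∀ ω, ∏ q ∈ T, F q (ω q) ω = ENNReal.ofReal (Real.exp
      (lam * (∑ q ∈ T, eta pr q (ω q) * c q ω) - lam * (K ^ 2 * lam * ∑ q ∈ T, c q ω ^ 2))) := by
    intro ω
    simp only [hFdef]
    rw [← ENNReal.ofReal_prod_of_nonneg (fun _ _ => (Real.exp_pos _).le), ← Real.exp_sum]
    congr 2
    rw [Finset.sum_sub_distrib, Finset.mul_sum, Finset.mul_sum, Finset.mul_sum]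
    congr 1
    · exact Finset.sum_congr rfl fun q _ => by ring
    · exact Finset.sum_congr rfl fun q _ => by ring
  have hpos : ENNReal.ofReal (Real.exp (lam * s)) ≠ 0 := by simp [Real.exp_pos]
  have hmk := mul_meas_ge_le_lintegral₀ (μ := P) (f := fun ω => ∏ q ∈ T, F q (ω q) ω)
    (by
      have : (fun ω => ∏ q ∈ T, F q (ω q) ω) = _ := funext hprod
      rw [this]
      refine Measurable.aemeasurable ?_
      have h2 : Measurable fun ω : Q → Bool => ∑ q ∈ T, c q ω ^ 2 :=
        Finset.measurable_sum _ fun q _ => (hc q).pow_const 2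
      fun_prop) (ENNReal.ofReal (Real.exp (lam * s)))
  have hsub : {ω | K ^ 2 * lam * (∑ q ∈ T, c q ω ^ 2) + s ≤ ∑ q ∈ T, eta pr q (ω q) * c q ω} ⊆
      {ω | ENNReal.ofReal (Real.exp (lam * s)) ≤ ∏ q ∈ T, F q (ω q) ω} := by
    intro ω hω
    simp only [Set.mem_ofPred_eq] at hω ⊢
    rw [hprod]
    refine ENNReal.ofReal_le_ofReal (Real.exp_le_exp.2 ?_)
    rw [← mul_sub]
    exact mul_le_mul_of_nonneg_left (by linarith) hl.le
  refine (measure_mono hsub).trans ?_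
  rw [Real.exp_neg, ENNReal.ofReal_inv_of_pos (Real.exp_pos _)]
  rw [ENNReal.le_inv_iff_mul_le, mul_comm]
  exact hmk.trans hI

/-- two-sided exponential deviation bound -/
lemma dev_two {K : ℝ} (hP : IsBern pr P) (h0 : ∀ q, 0 < pr q) (h1 : ∀ q, pr q ≤ 1)
    (hK : ∀ q, (pr q)⁻¹ ≤ K) (T : Finset Q) (c : Q → (Q → Bool) → ℝ)
    (hc : ∀ q, Measurable (c q)) (hdep : ∀ q ∈ T, DependsOn (c q) (↑T)ᶜ) (lam s : ℝ) (hl : 0 < lam) :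
    P {ω | K ^ 2 * lam * (∑ q ∈ T, c q ω ^ 2) + s ≤ |∑ q ∈ T, eta pr q (ω q) * c q ω|} ≤
      2 * ENNReal.ofReal (Real.exp (-(lam * s))) := by
  have a1 := dev_one hP h0 h1 hK T c hc hdep lam s hl
  have a2 := dev_one hP h0 h1 hK T (fun q ω => - c q ω) (fun q => (hc q).neg)
    (fun q hq x y hxy => by simp only [hdep q hq hxy]) lam s hl
  refine (measure_mono (t := _ ∪ _) ?_).trans ((measure_union_le _ _).trans
    ((add_le_add a1 a2).trans (two_mul _).ge))
  intro ω hω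
  simp only [Set.mem_ofPred_eq, Set.mem_union] at hω ⊢
  rcases le_abs.1 hω with h | h
  · exact Or.inl h
  · right
    simpa using h

end prob

set_option linter.unusedSectionVars false
section words
variable {M : ℕ} [NeZero M]

/-- The first `n` base-`M` digits of `x`. -/
def wd (M : ℕ) [NeZero M] (x : ℝ) : ℕ → List (Fin M)
  | 0 => []
  | n + 1 => wd M x n ++ [Fin.ofNat M ⌊(M : ℝ) ^ (n + 1) * x⌋₊]

@[simp] lemma length_wd (x : ℝ) (n : ℕ) : (wd M x n).length = n := by
  induction n with
  | zero => rfl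
  | succ n ih => simp [wd, ih]

/-- The nonempty digit word of length `n+1`. -/
def wdW (M : ℕ) [NeZero M] (x : ℝ) (n : ℕ) : Word1 M :=
  ⟨wd M x (n + 1), by intro h; have := congrArg List.length h; simp at this⟩

lemma wd_take (x : ℝ) {k n : ℕ} (h : k ≤ n) : (wd M x n).take k = wd M x k := by
  induction n with
  | zero => obtain rfl : k = 0 := by omega
            rfl
  | succ n ih =>
    rcases Nat.lt_or_ge n k with h' | h'
    · obtain rfl : k = n + 1 := by omega
      rw [List.take_of_length_le (by simp)]
    · rw [wd, List.take_append_of_le_length (by simpa using h')]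
      exact ih h'

lemma base1_range (w : List (Fin M)) : base1 M w = ∑ j ∈ Finset.range w.length,
    ((w[j]?.map Fin.val).getD 0 : ℝ) * (M : ℝ) ^ (-(j : ℤ) - 1) := by
  rw [base1, Finset.sum_range]
  refine Finset.sum_congr rfl fun j _ => ?_
  simp

lemma base1_append (w : List (Fin M)) (j : Fin M) :
    base1 M (w ++ [j]) = base1 M w + (j : ℝ) * (M : ℝ) ^ (-(w.length : ℤ) - 1) := by
  rw [base1_range, base1_range, List.length_append, List.length_singleton, Finset.sum_range_succ]
  congr 1
  · refine Finset.sum_congr rfl fun k hk => ?_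
    rw [List.getElem?_append_left (Finset.mem_range.1 hk)]
  · simp

lemma Mpos : (0 : ℝ) < M := by exact_mod_cast Nat.pos_of_neZero M

lemma base1_append' (w : List (Fin M)) (j : Fin M) :
    (M : ℝ) ^ (w.length + 1) * base1 M (w ++ [j]) = M * ((M : ℝ) ^ w.length * base1 M w) + j := by
  have := (Mpos (M := M)).ne'
  rw [base1_append, zpow_sub₀ this, zpow_neg]
  simp only [zpow_natCast, zpow_one]
  field_simp
  ring

lemma base1_nat (w : List (Fin M)) : ∃ k : ℕ, (M : ℝ) ^ w.length * base1 M w = k ∧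
    k + 1 ≤ M ^ w.length := by
  induction w using List.reverseRecOn with
  | nil => exact ⟨0, by simp [base1], by simp⟩
  | append_singleton w j ih =>
    obtain ⟨k, hk, hk'⟩ := ih
    refine ⟨M * k + j, ?_, ?_⟩
    · rw [List.length_append, List.length_singleton, base1_append', hk]; push_cast; ring
    · rw [List.length_append, List.length_singleton, pow_succ]
      have := j.2
      nlinarith

lemma floor_wd {x : ℝ} (hx : x ∈ Ico (0 : ℝ) 1) (n : ℕ) :
    (M : ℝ) ^ n * base1 M (wd M x n) = ⌊(M : ℝ) ^ n * x⌋₊ := by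
  induction n with
  | zero =>
    have : ⌊x⌋₊ = 0 := Nat.floor_eq_zero.2 hx.2
    simp [wd, base1_range, this]
  | succ n ih =>
    have h := base1_append' (wd M x n) (Fin.ofNat M ⌊(M : ℝ) ^ (n + 1) * x⌋₊)
    rw [length_wd] at h
    rw [wd, h, ih]
    have h2 : ⌊(M : ℝ) ^ n * x⌋₊ = ⌊(M : ℝ) ^ (n + 1) * x⌋₊ / M := by
      rw [← Nat.floor_div_natCast]
      congr 1
      have := (Mpos (M := M)).ne'
      field_simp
      ring
    rw [h2]
    simp only [Fin.val_ofNat]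
    exact_mod_cast Nat.div_add_mod _ _

lemma wd_iff {x : ℝ} {w : List (Fin M)} :
    (x ∈ Ico (0 : ℝ) 1 ∧ wd M x w.length = w) ↔
      (M : ℝ) ^ w.length * base1 M w ≤ (M : ℝ) ^ w.length * x ∧
      (M : ℝ) ^ w.length * x < (M : ℝ) ^ w.length * base1 M w + 1 := by
  constructor
  · rintro ⟨hx, hw⟩
    have := floor_wd (M := M) hx w.length
    rw [hw] at this
    rw [this]
    exact ⟨Nat.floor_le (mul_nonneg (pow_nonneg Mpos.le _) hx.1), Nat.lt_floor_add_one _⟩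
  · induction w using List.reverseRecOn with
    | nil => rintro ⟨h1, h2⟩; simp [base1] at h1 h2; exact ⟨⟨h1, h2⟩, rfl⟩
    | append_singleton w j ih =>
      rw [List.length_append, List.length_singleton, base1_append']
      obtain ⟨k, hk, hk'⟩ := base1_nat w
      rw [hk] at ih ⊢
      rintro ⟨h1, h2⟩
      have hj : (j : ℝ) + 1 ≤ M := by exact_mod_cast j.2
      have hj0 : (0 : ℝ) ≤ j := by positivity
      have hM := Mpos (M := M)
      have h3 := ih ⟨by
          rw [pow_succ'] at h1
          by_contra hc; push Not at hc
          nlinarith, by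
          rw [pow_succ'] at h2
          by_contra hc; push Not at hc
          nlinarith⟩
      refine ⟨h3.1, ?_⟩
      rw [wd, h3.2]
      congr 2
      have : ⌊(M : ℝ) ^ (w.length + 1) * x⌋₊ = M * k + j := by
        rw [Nat.floor_eq_iff (by
          refine le_trans ?_ h1; positivity)]
        push_cast
        exact ⟨h1, h2⟩
      rw [this]
      ext
      simp [Nat.mod_eq_of_lt j.2]

/-- The cell of a word: half-open `M`-adic interval. -/
def cell (M : ℕ) [NeZero M] (w : List (Fin M)) : Set ℝ :=
  {x | x ∈ Ico (0 : ℝ) 1 ∧ wd M x w.length = w}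

lemma cell_eq (w : List (Fin M)) :
    cell M w = Ico (base1 M w) (base1 M w + ((M : ℝ) ^ w.length)⁻¹) := by
  have hM := pow_pos (Mpos (M := M)) w.length
  ext x
  rw [cell, Set.mem_ofPred_eq, wd_iff, Set.mem_Ico]
  refine and_congr ?_ ?_
  · exact mul_le_mul_iff_right₀ hM
  · rw [show (M : ℝ) ^ w.length * base1 M w + 1 =
      (M : ℝ) ^ w.length * (base1 M w + ((M : ℝ) ^ w.length)⁻¹) by field_simp]
    exact mul_lt_mul_iff_right₀ hM

lemma cell_subset_interval1 (w : List (Fin M)) : cell M w ⊆ interval1 M w := by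
  rw [cell_eq, interval1, zpow_neg, zpow_natCast]
  exact Ico_subset_Icc_self

lemma cell_subset_Ico (w : List (Fin M)) : cell M w ⊆ Ico (0:ℝ) 1 := fun _ hx => hx.1

lemma measurableSet_cell (w : List (Fin M)) : MeasurableSet (cell M w) := by
  rw [cell_eq]; exact measurableSet_Ico

/-- Words of length `n`. -/
def WL (M n : ℕ) : Finset (List (Fin M)) := (List.finite_length_eq (Fin M) n).toFinset

@[simp] lemma mem_WL {n : ℕ} {w : List (Fin M)} : w ∈ WL M n ↔ w.length = n := by simp [WL]

lemma WW_finite (M n : ℕ) : {w : Word1 M | w.1.length = n + 1}.Finite :=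
  Set.Finite.preimage (Subtype.val_injective.injOn) (List.finite_length_eq (Fin M) (n + 1))

/-- Nonempty words of length `n+1`. -/
def WW (M n : ℕ) : Finset (Word1 M) := (WW_finite M n).toFinset

@[simp] lemma mem_WW {n : ℕ} {w : Word1 M} : w ∈ WW M n ↔ w.1.length = n + 1 := by simp [WW]

lemma card_WL (M n : ℕ) : (WL M n).card = M ^ n := by
  have h := card_vector (α := Fin M) n
  rw [Fintype.card_fin] at h
  rw [← h, ← Nat.card_eq_fintype_card, WL, ← Set.ncard_eq_toFinset_card _
    (List.finite_length_eq (Fin M) n)]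
  rfl

/-- Volume of a scaled translated cell. -/
lemma volume_cell_scaled (w : List (Fin M)) {a : ℝ} (ha : a ≠ 0) :
    volume {y : ℝ | y / a ∈ cell M w} = ENNReal.ofReal (|a| * ((M : ℝ) ^ w.length)⁻¹) := by
  have : {y : ℝ | y / a ∈ cell M w} = (fun y => y * a⁻¹) ⁻¹' cell M w := by
    ext y; simp [div_eq_mul_inv]
  rw [this, Real.volume_preimage_mul_right (inv_ne_zero ha), cell_eq, Real.volume_Ico]
  rw [← ENNReal.ofReal_mul (abs_nonneg _)]
  simp

lemma volume_cell_diff (w : List (Fin M)) {a : ℝ} (ha : a ≠ 0) (t s : ℝ) :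
    volume {y : ℝ | (-y + t) / a ∈ cell M w ∧ (-y + s) / a ∉ cell M w} ≤
      ENNReal.ofReal |t - s| := by
  rw [cell_eq]
  set u := base1 M w
  set v := base1 M w + ((M : ℝ) ^ w.length)⁻¹
  have aux : ∀ b c : ℝ, c - b ≤ |t - s| → volume (Ioc b c) ≤ ENNReal.ofReal |t - s| := by
    intro b c h
    rw [Real.volume_Ioc]; exact ENNReal.ofReal_le_ofReal h
  have aux' : ∀ b c : ℝ, c - b ≤ |t - s| → volume (Ico b c) ≤ ENNReal.ofReal |t - s| := by
    intro b c h
    rw [Real.volume_Ico]; exact ENNReal.ofReal_le_ofReal h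
  rcases lt_or_gt_of_ne ha with h | h
  · rcases le_total t s with hts | hts
    · refine (measure_mono ?_).trans (aux' (-(u * a) + t) (-(u * a) + s) ?_)
      · rintro y ⟨⟨h1, h2⟩, h3⟩
        rw [le_div_iff_of_neg h] at h1
        rw [div_lt_iff_of_neg h] at h2
        rw [Set.mem_Ico, not_and_or, le_div_iff_of_neg h, div_lt_iff_of_neg h] at h3
        rw [Set.mem_Ico]
        rcases h3 with h3 | h3 <;> constructor <;> linarith
      · rw [abs_of_nonpos (by linarith)]; linarith
    · refine (measure_mono ?_).trans (aux' (-(v * a) + s) (-(v * a) + t) ?_)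
      · rintro y ⟨⟨h1, h2⟩, h3⟩
        rw [le_div_iff_of_neg h] at h1
        rw [div_lt_iff_of_neg h] at h2
        rw [Set.mem_Ico, not_and_or, le_div_iff_of_neg h, div_lt_iff_of_neg h] at h3
        rw [Set.mem_Ico]
        rcases h3 with h3 | h3 <;> constructor <;> linarith
      · rw [abs_of_nonneg (by linarith)]; linarith
  · rcases le_total t s with hts | hts
    · refine (measure_mono ?_).trans (aux (-(v * a) + t) (-(v * a) + s) ?_)
      · rintro y ⟨⟨h1, h2⟩, h3⟩
        rw [le_div_iff₀ h] at h1
        rw [div_lt_iff₀ h] at h2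
        rw [Set.mem_Ico, not_and_or, le_div_iff₀ h, div_lt_iff₀ h] at h3
        rw [Set.mem_Ioc]
        rcases h3 with h3 | h3 <;> constructor <;> linarith
      · rw [abs_of_nonpos (by linarith)]; linarith
    · refine (measure_mono ?_).trans (aux (-(u * a) + s) (-(u * a) + t) ?_)
      · rintro y ⟨⟨h1, h2⟩, h3⟩
        rw [le_div_iff₀ h] at h1
        rw [div_lt_iff₀ h] at h2
        rw [Set.mem_Ico, not_and_or, le_div_iff₀ h, div_lt_iff₀ h] at h3
        rw [Set.mem_Ioc]
        rcases h3 with h3 | h3 <;> constructor <;> linarith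
      · rw [abs_of_nonneg (by linarith)]; linarith

end words

set_option linter.unusedSectionVars false
section dens
variable {d M : ℕ} [NeZero M]

/-- normalized label -/
def xi (p : Fin d → ℝ) (ω : Fin d × Word1 M → Bool) (q : Fin d × Word1 M) : ℝ≥0∞ :=
  if ω q then ENNReal.ofReal (p q.1)⁻¹ else 0

/-- level-`n` density of the natural measure of the `i`-th percolation -/
def phi (p : Fin d → ℝ) (ω : Fin d × Word1 M → Bool) (i : Fin d) (n : ℕ) (x : ℝ) : ℝ≥0∞ :=
  (Ico (0 : ℝ) 1).indicator (fun x => ∏ k ∈ Finset.range n, xi p ω (i, wdW M x k)) x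

variable {p : Fin d → ℝ} {ω ω' : Fin d × Word1 M → Bool} {i : Fin d} {n : ℕ} {x : ℝ}

lemma phi_zero : phi p ω i 0 x = (Ico (0 : ℝ) 1).indicator 1 x := by
  simp [phi, Set.indicator]

lemma phi_succ : phi p ω i (n + 1) x = phi p ω i n x * xi p ω (i, wdW M x n) := by
  by_cases hx : x ∈ Ico (0 : ℝ) 1
  · simp only [phi, Set.indicator_of_mem hx, Finset.prod_range_succ]
  · simp only [phi, Set.indicator_of_notMem hx, zero_mul]

lemma phi_out (hx : x ∉ Ico (0 : ℝ) 1) : phi p ω i n x = 0 := by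
  simp only [phi, Set.indicator_of_notMem hx]

lemma mem_cell_WW {w : Word1 M} (hw : w ∈ WW M n) :
    x ∈ cell M w.1 ↔ x ∈ Ico (0 : ℝ) 1 ∧ wdW M x n = w := by
  rw [mem_WW] at hw
  rw [cell, Set.mem_ofPred_eq, hw, Subtype.ext_iff]
  rfl

lemma sum_WW_indicator (f : Word1 M → ℝ≥0∞) (h : ℝ → ℝ≥0∞) (hx : x ∈ Ico (0 : ℝ) 1) (n : ℕ) :
    ∑ w ∈ WW M n, f w * (cell M w.1).indicator h x = f (wdW M x n) * h x := by
  rw [Finset.sum_eq_single (wdW M x n)]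
  · rw [Set.indicator_of_mem]
    rw [mem_cell_WW (n := n) (by simp [wdW])]
    exact ⟨hx, rfl⟩
  · intro w hw hne
    rw [Set.indicator_of_notMem, mul_zero]
    rw [mem_cell_WW hw]
    exact fun h => hne h.2.symm
  · intro h
    exact absurd (by simp [wdW]) h

lemma phi_sum : phi p ω i n x = ∑ w ∈ WW M n, (cell M w.1).indicator (phi p ω i n) x := by
  by_cases hx : x ∈ Ico (0 : ℝ) 1
  · have := sum_WW_indicator (M := M) (fun _ => 1) (phi p ω i n) hx n
    simpa using this.symm
  · rw [phi_out hx, Finset.sum_eq_zero]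
    intro w _
    exact Set.indicator_of_notMem (fun h => hx (cell_subset_Ico _ h)) _

lemma phi_succ_sum : phi p ω i (n + 1) x =
    ∑ w ∈ WW M n, xi p ω (i, w) * (cell M w.1).indicator (phi p ω i n) x := by
  by_cases hx : x ∈ Ico (0 : ℝ) 1
  · rw [sum_WW_indicator (M := M) (fun w => xi p ω (i, w)) (phi p ω i n) hx n, phi_succ, mul_comm]
  · rw [phi_out hx, Finset.sum_eq_zero]
    intro w _
    rw [Set.indicator_of_notMem (fun h => hx (cell_subset_Ico _ h)), mul_zero]

@[fun_prop] lemma measurable_phi : Measurable (phi p ω i n) := by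
  induction n with
  | zero =>
    have : phi p ω i 0 = (Ico (0 : ℝ) 1).indicator 1 := funext fun x => phi_zero
    rw [this]
    exact measurable_one.indicator measurableSet_Ico
  | succ n ih =>
    have : phi p ω i (n + 1) = fun x =>
      ∑ w ∈ WW M n, xi p ω (i, w) * (cell M w.1).indicator (phi p ω i n) x :=
      funext fun x => phi_succ_sum
    rw [this]
    exact Finset.measurable_sum _ fun w _ =>
      (ih.indicator (measurableSet_cell _)).const_mul _

lemma xi_le (q : Fin d × Word1 M) : xi p ω q ≤ ENNReal.ofReal (p q.1)⁻¹ := by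
  unfold xi; split_ifs <;> simp

lemma phi_le : phi p ω i n x ≤ ENNReal.ofReal (p i)⁻¹ ^ n := by
  by_cases hx : x ∈ Ico (0 : ℝ) 1
  · rw [phi, Set.indicator_of_mem hx]
    refine (Finset.prod_le_prod' (fun k _ => xi_le _)).trans ?_
    simp
  · rw [phi_out hx]; exact zero_le

lemma phi_cases : phi p ω i n x = 0 ∨ phi p ω i n x = ENNReal.ofReal (p i)⁻¹ ^ n := by
  by_cases hx : x ∈ Ico (0 : ℝ) 1
  · rw [phi, Set.indicator_of_mem hx]
    by_cases h : ∀ k ∈ Finset.range n, ω (i, wdW M x k) = true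
    · right
      rw [Finset.prod_congr rfl (g := fun _ => ENNReal.ofReal (p i)⁻¹)]
      · simp
      · intro k hk; simp [xi, h k hk]
    · left
      push Not at h
      obtain ⟨k, hk, h⟩ := h
      exact Finset.prod_eq_zero hk (by simp [xi, h])
  · left; exact phi_out hx

lemma phi_ne_zero (h : phi p ω i n x ≠ 0) : x ∈ Ico (0 : ℝ) 1 ∧
    ∀ k < n, ω (i, wdW M x k) = true := by
  by_cases hx : x ∈ Ico (0 : ℝ) 1
  · refine ⟨hx, fun k hk => ?_⟩
    rw [phi, Set.indicator_of_mem hx, Finset.prod_ne_zero_iff] at h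
    have := h k (Finset.mem_range.2 hk)
    by_contra hc
    exact this (by simp [xi, hc])
  · exact absurd (phi_out hx) h

lemma phi_congr (h : ∀ w : Word1 M, w.1.length ≤ n → ω (i, w) = ω' (i, w)) :
    phi p ω i n = phi p ω' i n := by
  funext x
  unfold phi
  congr 1
  funext x
  refine Finset.prod_congr rfl fun k hk => ?_
  have : ω (i, wdW M x k) = ω' (i, wdW M x k) := by
    refine h _ ?_
    have := Finset.mem_range.1 hk
    simp [wdW]; omega
  simp [xi, this]

lemma phi_const {x x' : ℝ} {w : List (Fin M)} (hw : n ≤ w.length) (hx : x ∈ cell M w)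
    (hx' : x' ∈ cell M w) : phi p ω i n x = phi p ω i n x' := by
  rw [phi, phi, Set.indicator_of_mem hx.1, Set.indicator_of_mem hx'.1]
  refine Finset.prod_congr rfl fun k hk => ?_
  have hk := Finset.mem_range.1 hk
  have : wdW M x k = wdW M x' k := by
    apply Subtype.ext
    change wd M x (k + 1) = wd M x' (k + 1)
    rw [← wd_take x (show k + 1 ≤ w.length by omega), hx.2,
      ← wd_take x' (show k + 1 ≤ w.length by omega), hx'.2]
  rw [this]

/-- density scaled by `a i` (not normalized) -/
def Fn (p a : Fin d → ℝ) (ω : Fin d × Word1 M → Bool) (i : Fin d) (n : ℕ) (y : ℝ) : ℝ≥0∞ :=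
  phi p ω i n (y / a i)

variable {a : Fin d → ℝ}

@[fun_prop] lemma measurable_Fn : Measurable (Fn p a ω i n) :=
  measurable_phi.comp (measurable_id.div_const _)

/-- Density of the convolution of the level-`lev` measures over the list `l`. -/
def gl (p a : Fin d → ℝ) (ω : Fin d × Word1 M → Bool) (lev : Fin d → ℕ) :
    List (Fin d) → ℝ → ℝ≥0∞
  | [] => 0
  | [i] => Fn p a ω i (lev i)
  | i :: j :: l => lconvolution (Fn p a ω i (lev i)) (gl p a ω lev (j :: l)) volume

variable {lev lev' : Fin d → ℕ} {l : List (Fin d)}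

lemma gl_cons (hl : l ≠ []) :
    gl p a ω lev (i :: l) = lconvolution (Fn p a ω i (lev i)) (gl p a ω lev l) volume := by
  cases l with
  | nil => exact absurd rfl hl
  | cons j l => rfl

lemma measurable_gl : Measurable (gl p a ω lev l) := by
  induction l with
  | nil => exact measurable_const
  | cons i l ih =>
    by_cases hl : l = []
    · subst hl; exact measurable_Fn
    · rw [gl_cons hl]; exact measurable_lconvolution _ measurable_Fn ih

lemma gl_perm {l l' : List (Fin d)} (h : l.Perm l') : gl p a ω lev l = gl p a ω lev l' := by
  induction h with
  | nil => rfl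
  | @cons x l₁ l₂ h ih =>
    by_cases hl : l₁ = []
    · subst hl
      have := List.nil_perm.1 h
      subst this; rfl
    · have hl2 : l₂ ≠ [] := by
        rintro rfl
        exact hl (List.perm_nil.1 h)
      rw [gl_cons hl, gl_cons hl2, ih]
  | swap x y l =>
    by_cases hl : l = []
    · subst hl
      change lconvolution _ _ _ = lconvolution _ _ _
      exact lconvolution_comm
    · rw [gl_cons (by simp), gl_cons hl, gl_cons (by simp), gl_cons hl,
        lconvolution_assoc measurable_Fn measurable_Fn measurable_gl,
        lconvolution_assoc measurable_Fn measurable_Fn measurable_gl]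
      congr 1
      exact lconvolution_comm
  | trans _ _ ih1 ih2 => exact ih1.trans ih2

lemma gl_congr (h : ∀ i ∈ l, ∀ w : Word1 M, w.1.length ≤ lev i → ω (i, w) = ω' (i, w)) :
    gl p a ω lev l = gl p a ω' lev l := by
  induction l with
  | nil => rfl
  | cons i l ih =>
    have hF : Fn p a ω i (lev i) = Fn p a ω' i (lev i) := by
      funext y
      unfold Fn
      rw [phi_congr (h i (by simp))]
    by_cases hl : l = []
    · subst hl; exact hF
    · rw [gl_cons hl, gl_cons hl, hF, ih fun j hj => h j (by simp [hj])]

lemma gl_lev_congr (h : ∀ i ∈ l, lev i = lev' i) : gl p a ω lev l = gl p a ω lev' l := by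
  induction l with
  | nil => rfl
  | cons i l ih =>
    by_cases hl : l = []
    · subst hl; simp [gl, h i (by simp)]
    · rw [gl_cons hl, gl_cons hl, h i (by simp), ih fun j hj => h j (by simp [hj])]

lemma phi_mono_lev (hpM : ∀ i, (p i)⁻¹ ≤ M) : phi p ω i (n + 1) x ≤ M * phi p ω i n x := by
  rw [phi_succ, mul_comm]
  gcongr
  refine (xi_le _).trans ?_
  exact (ENNReal.ofReal_le_ofReal (hpM i)).trans (by simp)

lemma gl_mono_lev (hpM : ∀ i, (p i)⁻¹ ≤ M) (h : ∀ i, lev i = n ∨ lev i = n + 1) (t : ℝ) :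
    gl p a ω lev l t ≤ (M : ℝ≥0∞) ^ l.length * gl p a ω (fun _ => n) l t := by
  have hM1 : (1 : ℝ≥0∞) ≤ M := by exact_mod_cast Nat.pos_of_neZero M
  have hF : ∀ i y, Fn p a ω i (lev i) y ≤ M * Fn p a ω i n y := by
    intro i y
    rcases h i with h | h
    · rw [h]; exact le_mul_of_one_le_left zero_le hM1
    · rw [h]; exact phi_mono_lev hpM
  induction l generalizing t with
  | nil => simp [gl]
  | cons i l ih =>
    by_cases hl : l = []
    · subst hl; simpa [gl] using hF i t
    · rw [gl_cons hl, gl_cons hl, lconvolution_def, lconvolution_def,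
        ← lintegral_const_mul _ (by
          exact measurable_Fn.mul (measurable_gl.comp (measurable_neg.add_const t)))]
      refine lintegral_mono fun y => ?_
      refine (mul_le_mul' (hF i y) (ih _)).trans (le_of_eq ?_)
      rw [List.length_cons, pow_succ]; ring

lemma lintegral_Fn_le {A0 : ℝ} (ha : ∀ i, a i ≠ 0) (hA : ∀ i, |a i| ≤ A0) (hpM : ∀ i, (p i)⁻¹ ≤ M) :
    ∫⁻ y, Fn p a ω i n y ≤ (M : ℝ≥0∞) ^ n * ENNReal.ofReal A0 := by
  have hle : ∀ y, Fn p a ω i n y ≤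
      {y : ℝ | y / a i ∈ cell M []}.indicator (fun _ => (M : ℝ≥0∞) ^ n) y := by
    intro y
    by_cases hy : y / a i ∈ cell M []
    · rw [Set.indicator_of_mem (by exact hy)]
      refine phi_le.trans ?_
      gcongr
      exact (ENNReal.ofReal_le_ofReal (hpM i)).trans (by simp)
    · rw [Set.indicator_of_notMem (by exact hy), Fn, phi_out]
      intro h
      exact hy ⟨h, rfl⟩
  refine (lintegral_mono hle).trans ?_
  rw [lintegral_indicator (by
    exact (measurable_id.div_const _) (measurableSet_cell [])), setLIntegral_const,
    volume_cell_scaled _ (ha i)]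
  simp only [List.length_nil, pow_zero, inv_one, mul_one]
  gcongr
  exact hA i

lemma gl_le {A0 : ℝ} {N : ℕ} (hA1 : 1 ≤ A0) (ha : ∀ i, a i ≠ 0) (hA : ∀ i, |a i| ≤ A0)
    (hpM : ∀ i, (p i)⁻¹ ≤ M) (hlev : ∀ i, lev i ≤ N) (t : ℝ) :
    gl p a ω lev l t ≤ ((M : ℝ≥0∞) ^ N * ENNReal.ofReal A0) ^ l.length := by
  have hM1 : (1 : ℝ≥0∞) ≤ M := by exact_mod_cast Nat.pos_of_neZero M
  have hA1' : (1 : ℝ≥0∞) ≤ ENNReal.ofReal A0 := by simpa using hA1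
  induction l generalizing t with
  | nil => simp [gl]
  | cons i l ih =>
    by_cases hl : l = []
    · subst hl
      simp only [gl, List.length_singleton, pow_one]
      refine le_trans ?_ (le_mul_of_one_le_right zero_le hA1')
      refine phi_le.trans ?_
      refine le_trans ?_ (pow_le_pow_right₀ hM1 (hlev i))
      gcongr
      exact (ENNReal.ofReal_le_ofReal (hpM i)).trans (by simp)
    · rw [gl_cons hl, lconvolution_def, List.length_cons, pow_succ']
      refine (lintegral_mono fun y => mul_le_mul' le_rfl (ih _)).trans ?_
      rw [lintegral_mul_const _ measurable_Fn]
      gcongr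
      refine (lintegral_Fn_le ha hA hpM).trans ?_
      gcongr
      · exact hlev i

lemma gl_ne_top (ha : ∀ i, a i ≠ 0) 
    (hpM : ∀ i, (p i)⁻¹ ≤ M) (t : ℝ) : gl p a ω lev l t ≠ ∞ := by
  have hA : ∀ i, |a i| ≤ 1 + ∑ j, |a j| := fun i => by
    have := Finset.single_le_sum (f := fun j => |a j|) (fun j _ => abs_nonneg _) (Finset.mem_univ i)
    linarith
  refine ne_top_of_le_ne_top ?_ (gl_le (A0 := 1 + ∑ j, |a j|) (N := ∑ j, lev j) ?_ ha hA hpM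
    (fun i => Finset.single_le_sum (f := lev) (fun _ _ => Nat.zero_le _) (Finset.mem_univ i)) t)
  · exact ENNReal.pow_ne_top (ENNReal.mul_ne_top (ENNReal.pow_ne_top (by simp)) (by simp))
  · have := Finset.sum_nonneg (fun j (_ : j ∈ Finset.univ) => abs_nonneg (a j))
    linarith

/-- Lipschitz estimate -/
lemma gl_lip {G : ℝ≥0∞} (ha : ∀ i, a i ≠ 0) (hpM : ∀ i, (p i)⁻¹ ≤ M) (hl : l ≠ [])
    (hG : ∀ t, gl p a ω lev l t ≤ G) (t s : ℝ) :
    gl p a ω lev (i :: l) t ≤ gl p a ω lev (i :: l) s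
      + (M : ℝ≥0∞) ^ (lev i) * (M : ℝ≥0∞) ^ (lev i) * G * ENNReal.ofReal |t - s| := by
  rw [gl_cons hl, lconvolution_comm, lconvolution_def, lconvolution_def]
  set n := lev i
  have key : ∀ y, Fn p a ω i n (-y + t) ≤ Fn p a ω i n (-y + s) +
      ∑ w ∈ WL M n, {y : ℝ | (-y + t) / a i ∈ cell M w ∧ (-y + s) / a i ∉ cell M w}.indicator
        (fun _ => (M : ℝ≥0∞) ^ n) y := by
    intro y
    by_cases h0 : Fn p a ω i n (-y + t) = 0
    · rw [h0]; exact zero_le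
    have hx := (phi_ne_zero h0).1
    set w := wd M ((-y + t) / a i) n
    have hw : w.length = n := by simp [w]
    have hc : (-y + t) / a i ∈ cell M w := ⟨hx, by rw [hw]⟩
    by_cases h1 : (-y + s) / a i ∈ cell M w
    · refine le_trans (le_of_eq ?_) le_self_add
      exact phi_const hw.ge hc h1
    · refine le_trans ?_ le_add_self
      refine le_trans ?_ (Finset.single_le_sum (f := fun w => {y : ℝ | (-y + t) / a i ∈ cell M w ∧
        (-y + s) / a i ∉ cell M w}.indicator (fun _ => (M : ℝ≥0∞) ^ n) y)
        (fun _ _ => zero_le) (mem_WL.2 hw))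
      rw [Set.indicator_of_mem (by exact ⟨hc, h1⟩)]
      refine phi_le.trans ?_
      gcongr
      exact (ENNReal.ofReal_le_ofReal (hpM i)).trans (by simp)
  have hms : ∀ w : List (Fin M), MeasurableSet
      {y : ℝ | (-y + t) / a i ∈ cell M w ∧ (-y + s) / a i ∉ cell M w} := by
    intro w
    refine MeasurableSet.inter (s₁ := {y : ℝ | (-y + t) / a i ∈ cell M w})
      (s₂ := {y : ℝ | (-y + s) / a i ∉ cell M w}) ?_ ?_
    · exact (by fun_prop : Measurable fun y : ℝ => (-y + t) / a i) (measurableSet_cell w)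
    · exact (by fun_prop : Measurable fun y : ℝ => (-y + s) / a i) (measurableSet_cell w).compl
  calc ∫⁻ y, gl p a ω lev l y * Fn p a ω i n (-y + t)
      ≤ ∫⁻ y, (gl p a ω lev l y * Fn p a ω i n (-y + s) + G *
      ∑ w ∈ WL M n, {y : ℝ | (-y + t) / a i ∈ cell M w ∧ (-y + s) / a i ∉ cell M w}.indicator
        (fun _ => (M : ℝ≥0∞) ^ n) y) := by
        refine lintegral_mono fun y => (mul_le_mul' le_rfl (key y)).trans ?_
        rw [mul_add]
        gcongr
        exact hG y
    _ ≤ _ := by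
        have hmm : Measurable fun y => gl p a ω lev l y * Fn p a ω i n (-y + s) :=
          measurable_gl.mul (measurable_Fn.comp (measurable_neg.add_const s))
        rw [lintegral_add_left hmm]
        gcongr
        rw [lintegral_const_mul _ (Finset.measurable_sum _ fun w _ =>
          measurable_const.indicator (hms w)), lintegral_finsetSum _ (fun w _ =>
          measurable_const.indicator (hms w))]
        have : ∀ w ∈ WL M n, ∫⁻ y, {y : ℝ | (-y + t) / a i ∈ cell M w ∧
            (-y + s) / a i ∉ cell M w}.indicator (fun _ => (M : ℝ≥0∞) ^ n) y ≤
            (M : ℝ≥0∞) ^ n * ENNReal.ofReal |t - s| := by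
          intro w _
          rw [lintegral_indicator (hms w), setLIntegral_const]
          gcongr
          exact volume_cell_diff w (ha i) t s
        refine (mul_le_mul' le_rfl (Finset.sum_le_sum this)).trans (le_of_eq ?_)
        rw [Finset.sum_const, card_WL, nsmul_eq_mul]
        push_cast
        ring

lemma gl_support (hl : l.Nodup) (hne : l ≠ []) {t : ℝ} (h : gl p a ω lev l t ≠ 0) :
    ∃ y : Fin d → ℝ, (∀ i ∈ l, Fn p a ω i (lev i) (y i) ≠ 0) ∧ (l.map y).sum = t := by
  induction l generalizing t with
  | nil => exact absurd rfl hne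
  | cons i l ih =>
    by_cases hl' : l = []
    · subst hl'
      exact ⟨fun _ => t, by simpa [gl] using h, by simp⟩
    · rw [gl_cons hl', lconvolution_def] at h
      obtain ⟨y, hy⟩ : ∃ y, Fn p a ω i (lev i) y * gl p a ω lev l (-y + t) ≠ 0 := by
        by_contra hc
        push Not at hc
        exact h (by simp [hc])
      obtain ⟨h1, h2⟩ := mul_ne_zero_iff.1 hy
      obtain ⟨z, hz, hs⟩ := ih (List.nodup_cons.1 hl).2 hl' h2
      have hi := (List.nodup_cons.1 hl).1
      refine ⟨Function.update z i y, ?_, ?_⟩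
      · intro j hj
        rcases List.mem_cons.1 hj with hj' | hj'
        · subst hj'; simpa using h1
        · rw [Function.update_of_ne (by rintro rfl; exact hi hj')]; exact hz j hj'
      · rw [List.map_cons, List.sum_cons, Function.update_self]
        have : l.map (Function.update z i y) = l.map z := by
          refine List.map_congr_left fun j hj => ?_
          rw [Function.update_of_ne (by rintro rfl; exact hi hj)]
        rw [this, hs]; ring

lemma lintegral_gl (hne : l ≠ []) :
    ∫⁻ t, gl p a ω lev l t = (l.map fun i => ∫⁻ y, Fn p a ω i (lev i) y).prod := by
  induction l with
  | nil => exact absurd rfl hne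
  | cons i l ih =>
    by_cases hl' : l = []
    · subst hl'; simp [gl]
    · rw [gl_cons hl', List.map_cons, List.prod_cons, ← ih hl']
      simp only [lconvolution_def]
      have hg : Measurable (gl p a ω lev l) := measurable_gl
      rw [lintegral_lintegral_swap]
      · have : ∀ y, ∫⁻ x, Fn p a ω i (lev i) y * gl p a ω lev l (-y + x) =
            Fn p a ω i (lev i) y * ∫⁻ x, gl p a ω lev l x := by
          intro y
          have hmm : Measurable fun x => gl p a ω lev l (-y + x) :=
            hg.comp (measurable_const.add measurable_id)
          rw [lintegral_const_mul _ hmm]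
          congr 1
          exact lintegral_add_left_eq_self (μ := volume) (gl p a ω lev l) (-y)
        simp only [this]
        rw [lintegral_mul_const _ measurable_Fn]
      · apply Measurable.aemeasurable
        have hF : Measurable (Fn p a ω i (lev i)) := measurable_Fn
        unfold Function.uncurry
        fun_prop

end dens

lemma summable_test {r κ : ℝ} (hr : 1 < r) (hκ : 0 < κ) :
    Summable fun n : ℕ => κ ^ n * Real.exp (-(r ^ n)) := by
  obtain ⟨j, hj⟩ := pow_unbounded_of_one_lt (2 * κ) hr
  have hr0 : 0 < r := by linarith
  refine Summable.of_nonneg_of_le (fun n => by positivity) (fun n => ?_)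
    ((summable_geometric_two).mul_left (j.factorial : ℝ))
  have h1 := Real.pow_div_factorial_le_exp (r ^ n) (by positivity) j
  have hf : (0 : ℝ) < j.factorial := by exact_mod_cast Nat.factorial_pos j
  have h2 : Real.exp (-(r ^ n)) ≤ j.factorial / (r ^ n) ^ j := by
    rw [Real.exp_neg, ← inv_div]
    exact inv_anti₀ (by positivity) h1
  calc κ ^ n * Real.exp (-(r ^ n)) ≤ κ ^ n * (j.factorial / (r ^ n) ^ j) := by gcongr
    _ = j.factorial * (κ / r ^ j) ^ n := by
        rw [div_pow, ← pow_mul, ← pow_mul, mul_comm n j]; ring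
    _ ≤ j.factorial * (1 / 2) ^ n := by
        have : κ / r ^ j ≤ 1 / 2 := by
          rw [div_le_div_iff₀ (by positivity) (by norm_num)]
          linarith
        gcongr ?_ * ?_ ^ n

section bc
variable {Q : Type*} {pr : Q → ℝ} {P : Measure (Q → Bool)} [IsProbabilityMeasure P] [DecidableEq Q]

lemma bc_dev {K : ℝ} (hP : IsBern pr P) (h0 : ∀ q, 0 < pr q) (h1 : ∀ q, pr q ≤ 1)
    (hK : ∀ q, (pr q)⁻¹ ≤ K) (T : ℕ → Finset Q) (J : ℕ → Finset ℤ)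
    (c : ℕ → ℤ → Q → (Q → Bool) → ℝ) (hc : ∀ n k q, Measurable (c n k q))
    (hdep : ∀ n k, ∀ q ∈ T n, DependsOn (c n k q) ((T n : Set Q)ᶜ))
    {θ r κ C : ℝ} (hθ : 0 < θ) (hr : 1 < r) (hκ : 0 < κ)
    (hJ : ∀ n, ((J n).card : ℝ) ≤ C * κ ^ n) :
    ∀ᵐ ω ∂P, ∀ᶠ n in Filter.atTop, ∀ k ∈ J n,
      |∑ q ∈ T n, eta pr q (ω q) * c n k q ω| ≤
        K ^ 2 * ((θ * r)⁻¹) ^ n * (∑ q ∈ T n, c n k q ω ^ 2) + (θ * r ^ 2) ^ n := by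
  set B : ℕ → Set (Q → Bool) := fun n => ⋃ k ∈ J n, {ω | K ^ 2 * ((θ * r)⁻¹) ^ n *
    (∑ q ∈ T n, c n k q ω ^ 2) + (θ * r ^ 2) ^ n ≤ |∑ q ∈ T n, eta pr q (ω q) * c n k q ω|} with hB
  have hb : ∀ n, P (B n) ≤ ENNReal.ofReal (2 * C * (κ ^ n * Real.exp (-(r ^ n)))) := by
    intro n
    refine (measure_biUnion_finset_le _ _).trans ?_
    have : ∀ k ∈ J n, P {ω | K ^ 2 * ((θ * r)⁻¹) ^ n *
      (∑ q ∈ T n, c n k q ω ^ 2) + (θ * r ^ 2) ^ n ≤ |∑ q ∈ T n, eta pr q (ω q) * c n k q ω|} ≤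
        ENNReal.ofReal (2 * Real.exp (-(r ^ n))) := by
      intro k _
      have hr0 : 0 < r := by linarith
      refine (dev_two hP h0 h1 hK (T n) (c n k) (hc n k) (hdep n k) (((θ * r)⁻¹) ^ n)
        ((θ * r ^ 2) ^ n) (by positivity)).trans (le_of_eq ?_)
      rw [← mul_pow, show (θ * r)⁻¹ * (θ * r ^ 2) = r by field_simp,
        ENNReal.ofReal_mul (by norm_num)]
      simp
    refine (Finset.sum_le_sum this).trans ?_
    rw [Finset.sum_const, nsmul_eq_mul, ← ENNReal.ofReal_natCast, ← ENNReal.ofReal_mul (by positivity)]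
    refine ENNReal.ofReal_le_ofReal ?_
    calc ((J n).card : ℝ) * (2 * Real.exp (-(r ^ n))) ≤ (C * κ ^ n) * (2 * Real.exp (-(r ^ n))) := by
          gcongr; exact hJ n
      _ = _ := by ring
  have hsum : ∑' n, P (B n) ≠ ∞ := by
    refine ne_top_of_le_ne_top ?_ (ENNReal.tsum_le_tsum hb)
    exact ((summable_test hr hκ).mul_left (2 * C)).tsum_ofReal_ne_top
  filter_upwards [ae_eventually_notMem hsum] with ω hω
  filter_upwards [hω] with n hn k hk
  by_contra hc
  push Not at hc
  exact hn (mem_biUnion hk hc.le)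
end bc

section step
variable {d M : ℕ} [NeZero M]

/-- contribution of a single cell -/
def cw (p a : Fin d → ℝ) (ω : Fin d × Word1 M → Bool) (lev : Fin d → ℕ) (l : List (Fin d))
    (i : Fin d) (n : ℕ) (t : ℝ) (w : Word1 M) : ℝ≥0∞ :=
  ∫⁻ y, {y : ℝ | y / a i ∈ cell M w.1}.indicator (Fn p a ω i n) y * gl p a ω lev l (-y + t)

variable {p a : Fin d → ℝ} {ω ω' : Fin d × Word1 M → Bool} {lev lev' : Fin d → ℕ}
  {l : List (Fin d)} {i : Fin d} {n : ℕ} {t : ℝ}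

lemma measurableSet_cs (w : Word1 M) : MeasurableSet {y : ℝ | y / a i ∈ cell M w.1} :=
  (measurable_id.div_const (a i)) (measurableSet_cell _)

lemma measurable_cwi (w : Word1 M) : Measurable fun y =>
    {y : ℝ | y / a i ∈ cell M w.1}.indicator (Fn p a ω i n) y * gl p a ω lev l (-y + t) :=
  (measurable_Fn.indicator (measurableSet_cs w)).mul
    (measurable_gl.comp (measurable_neg.add_const t))

lemma gl_sum_cw (hl : l ≠ []) (h : lev i = n) :
    gl p a ω lev (i :: l) t = ∑ w ∈ WW M n, cw p a ω lev l i n t w := by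
  rw [gl_cons hl, lconvolution_def]
  unfold cw
  rw [← lintegral_finsetSum _ fun w _ => measurable_cwi w]
  refine lintegral_congr fun y => ?_
  rw [← Finset.sum_mul, h]
  congr 1
  exact phi_sum

lemma gl_sum_cw' (hl : l ≠ []) (h : lev i = n + 1) :
    gl p a ω lev (i :: l) t = ∑ w ∈ WW M n, xi p ω (i, w) * cw p a ω lev l i n t w := by
  rw [gl_cons hl, lconvolution_def]
  unfold cw
  simp_rw [← lintegral_const_mul _ (measurable_cwi _)]
  rw [← lintegral_finsetSum _ fun w _ => (measurable_cwi w).const_mul _]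
  refine lintegral_congr fun y => ?_
  simp_rw [← mul_assoc]
  rw [← Finset.sum_mul, h]
  congr 1
  exact phi_succ_sum

lemma cw_congr_lev (h : ∀ i ∈ l, lev i = lev' i) (w : Word1 M) :
    cw p a ω lev l i n t w = cw p a ω lev' l i n t w := by
  unfold cw
  rw [gl_lev_congr h]

lemma cw_congr (hi : ∀ w : Word1 M, w.1.length ≤ n → ω (i, w) = ω' (i, w))
    (h : ∀ i ∈ l, ∀ w : Word1 M, w.1.length ≤ lev i → ω (i, w) = ω' (i, w)) (w : Word1 M) :
    cw p a ω lev l i n t w = cw p a ω' lev l i n t w := by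
  unfold cw
  rw [gl_congr h]
  have : Fn p a ω i n = Fn p a ω' i n := by
    funext y
    unfold Fn
    rw [phi_congr hi]
  rw [this]

lemma cw_le (ha : ∀ i, a i ≠ 0) {G : ℝ≥0∞} (hG : ∀ t, gl p a ω lev l t ≤ G) {w : Word1 M}
    (hw : w ∈ WW M n) :
    cw p a ω lev l i n t w ≤
      ENNReal.ofReal (p i)⁻¹ ^ n * G * ENNReal.ofReal (|a i| * ((M : ℝ) ^ (n + 1))⁻¹) := by
  rw [mem_WW] at hw
  have : ∀ y, {y : ℝ | y / a i ∈ cell M w.1}.indicator (Fn p a ω i n) y * gl p a ω lev l (-y + t)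
      ≤ {y : ℝ | y / a i ∈ cell M w.1}.indicator (fun _ => ENNReal.ofReal (p i)⁻¹ ^ n * G) y := by
    intro y
    by_cases hy : y ∈ {y : ℝ | y / a i ∈ cell M w.1}
    · rw [Set.indicator_of_mem hy, Set.indicator_of_mem hy]
      exact mul_le_mul' phi_le (hG _)
    · rw [Set.indicator_of_notMem hy, zero_mul]; exact zero_le
  refine (lintegral_mono this).trans ?_
  rw [lintegral_indicator (measurableSet_cs w), setLIntegral_const, volume_cell_scaled _ (ha i), hw]

lemma cw_ne_top (ha : ∀ i, a i ≠ 0) (hpM : ∀ i, (p i)⁻¹ ≤ M) (hl : l ≠ []) {w : Word1 M}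
    (hw : w ∈ WW M n) (hi : i ∉ l) : cw p a ω lev l i n t w ≠ ∞ := by
  have : cw p a ω lev l i n t w = cw p a ω (Function.update lev i n) l i n t w :=
    cw_congr_lev (fun j hj => by
      rw [Function.update_of_ne]; rintro rfl; exact hi hj) w
  rw [this]
  refine ne_top_of_le_ne_top (gl_ne_top (l := i :: l) (t := t) (ω := ω)
    (lev := Function.update lev i n) ha hpM) ?_
  rw [gl_sum_cw (n := n) hl (by simp)]
  exact Finset.single_le_sum (f := fun w => cw p a ω (Function.update lev i n) l i n t w)
    (fun _ _ => zero_le) hw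

/-- real valued density -/
def g (p a : Fin d → ℝ) (ω : Fin d × Word1 M → Bool) (lev : Fin d → ℕ)
    (l : List (Fin d)) (t : ℝ) : ℝ := (gl p a ω lev l t).toReal

/-- the labels of the words of length `n+1` -/
def TT (M : ℕ) [NeZero M] (i : Fin d) (n : ℕ) : Finset (Fin d × Word1 M) :=
  (WW M n).map (Function.Embedding.sectR i (Word1 M))

lemma xi_eta (hp0 : ∀ i, 0 < p i) (q : Fin d × Word1 M) :
    (xi p ω q).toReal = eta (fun q => p q.1) q (ω q) + 1 := by
  unfold xi eta
  split_ifs with h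
  · simp [ENNReal.toReal_ofReal (inv_pos.2 (hp0 q.1)).le]
  · simp

lemma g_diff (ha : ∀ i, a i ≠ 0) (hpM : ∀ i, (p i)⁻¹ ≤ M) (hp0 : ∀ i, 0 < p i)
    (hl : l ≠ []) (hi : i ∉ l) (h : lev i = n) (h' : lev' i = n + 1)
    (hc : ∀ j ∈ l, lev' j = lev j) :
    g p a ω lev' (i :: l) t - g p a ω lev (i :: l) t =
      ∑ q ∈ TT M i n, eta (fun q => p q.1) q (ω q) * (cw p a ω lev l i n t q.2).toReal := by
  unfold g
  rw [gl_sum_cw hl h, gl_sum_cw' hl h', TT, Finset.sum_map,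
    ENNReal.toReal_sum fun w hw => cw_ne_top ha hpM hl hw hi,
    ENNReal.toReal_sum fun w hw => ENNReal.mul_ne_top (by unfold xi; split_ifs <;> simp)
      (cw_ne_top ha hpM hl hw hi), ← Finset.sum_sub_distrib]
  refine Finset.sum_congr rfl fun w hw => ?_
  rw [ENNReal.toReal_mul, xi_eta hp0, cw_congr_lev hc]
  simp only [Function.Embedding.sectR_apply]
  ring

lemma cw_measurable (w : Word1 M) : Measurable fun ω : Fin d × Word1 M → Bool =>
    (cw p a ω lev l i n t w).toReal := by
  have hs : ({q : Fin d × Word1 M | q.2.1.length ≤ n + ∑ j, lev j}).Finite := by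
    have h1 : ({w : Word1 M | w.1.length ≤ n + ∑ j, lev j}).Finite :=
      (List.finite_length_le (Fin M) _).preimage Subtype.val_injective.injOn
    exact ((Set.finite_univ (α := Fin d)).prod h1).subset fun q hq => ⟨mem_univ _, hq⟩
  refine measurable_of_dependsOn hs ?_
  intro ω ω' h
  simp only
  rw [cw_congr]
  · intro w hw
    exact h _ (by simp only [Set.mem_ofPred_eq]; omega)
  · intro j _ w hw
    have := Finset.single_le_sum (f := lev) (fun _ _ => Nat.zero_le _) (Finset.mem_univ j)
    exact h _ (by simp only [Set.mem_ofPred_eq]; omega)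

lemma cw_dep (hi : i ∉ l) (w : Word1 M) : DependsOn (fun ω : Fin d × Word1 M → Bool =>
    (cw p a ω lev l i n t w).toReal) ((TT M i n : Set (Fin d × Word1 M))ᶜ) := by
  intro ω ω' h
  simp only
  rw [cw_congr]
  · intro w hw
    refine h _ ?_
    simp only [TT, Set.mem_compl_iff, Finset.mem_coe, Finset.mem_map, not_exists, not_and]
    rintro x hx hxx
    have : x = w := congrArg Prod.snd hxx
    rw [mem_WW, this] at hx; omega
  · intro j hj w hw
    refine h _ ?_
    simp only [TT, Set.mem_compl_iff, Finset.mem_coe, Finset.mem_map, not_exists, not_and]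
    rintro x hx hxx
    have : i = j := congrArg Prod.fst hxx
    exact hi (this ▸ hj)

end step

section stepr
variable {d M : ℕ} [NeZero M]
variable {p a : Fin d → ℝ} {ω ω' : Fin d × Word1 M → Bool} {lev lev' : Fin d → ℕ}
  {l : List (Fin d)} {i : Fin d} {n : ℕ} {t : ℝ}

lemma g_nonneg : 0 ≤ g p a ω lev l t := ENNReal.toReal_nonneg

lemma g_perm {l l' : List (Fin d)} (h : l.Perm l') : g p a ω lev l = g p a ω lev l' := by
  funext t; unfold g; rw [gl_perm h]

lemma ofReal_g (ha : ∀ i, a i ≠ 0) (hpM : ∀ i, (p i)⁻¹ ≤ M) :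
    gl p a ω lev l t = ENNReal.ofReal (g p a ω lev l t) :=
  (ENNReal.ofReal_toReal (gl_ne_top ha hpM t)).symm

lemma g_mono (ha : ∀ i, a i ≠ 0) (hpM : ∀ i, (p i)⁻¹ ≤ M) (h : ∀ i, lev i = n ∨ lev i = n + 1) :
    g p a ω lev l t ≤ (M : ℝ) ^ l.length * g p a ω (fun _ => n) l t := by
  have := ENNReal.toReal_mono (ENNReal.mul_ne_top (ENNReal.pow_ne_top (by simp))
    (gl_ne_top ha hpM t)) (gl_mono_lev (ω := ω) (l := l) hpM h t)
  simpa [g] using this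

lemma g_crude {A0 : ℝ} {N : ℕ} (hA1 : 1 ≤ A0) (ha : ∀ i, a i ≠ 0) (hA : ∀ i, |a i| ≤ A0)
    (hpM : ∀ i, (p i)⁻¹ ≤ M) (hlev : ∀ i, lev i ≤ N) :
    g p a ω lev l t ≤ ((M : ℝ) ^ N * A0) ^ l.length := by
  have := ENNReal.toReal_mono (ENNReal.pow_ne_top (ENNReal.mul_ne_top (ENNReal.pow_ne_top (by simp))
    (by simp))) (gl_le (ω := ω) (l := l) hA1 ha hA hpM hlev t)
  rw [ENNReal.toReal_pow, ENNReal.toReal_mul, ENNReal.toReal_ofReal (by linarith)] at this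
  simpa [g] using this

lemma g_lip {G : ℝ} (ha : ∀ i, a i ≠ 0) (hpM : ∀ i, (p i)⁻¹ ≤ M) (hl : l ≠ []) (hG0 : 0 ≤ G)
    (hG : ∀ t, g p a ω lev l t ≤ G) (t s : ℝ) :
    |g p a ω lev (i :: l) t - g p a ω lev (i :: l) s| ≤
      (M : ℝ) ^ (lev i) * (M : ℝ) ^ (lev i) * G * |t - s| := by
  have key : ∀ t s : ℝ, g p a ω lev (i :: l) t ≤ g p a ω lev (i :: l) s +
      (M : ℝ) ^ (lev i) * (M : ℝ) ^ (lev i) * G * |t - s| := by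
    intro t s
    have h := gl_lip (ω := ω) (lev := lev) (l := l) (i := i) (G := ENNReal.ofReal G) ha hpM hl
      (fun t => by rw [ofReal_g ha hpM]; exact ENNReal.ofReal_le_ofReal (hG t)) t s
    rw [ofReal_g ha hpM, ofReal_g ha hpM, ← ENNReal.ofReal_natCast, ← ENNReal.ofReal_pow (by positivity),
      ← ENNReal.ofReal_mul (by positivity), ← ENNReal.ofReal_mul (by positivity),
      ← ENNReal.ofReal_mul (by positivity), ← ENNReal.ofReal_add g_nonneg (by positivity)] at h
    exact (ENNReal.ofReal_le_ofReal_iff (add_nonneg g_nonneg (by positivity))).1 h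
  rw [abs_le]
  have h1 := key t s
  have h2 := key s t
  rw [abs_sub_comm] at h2
  constructor <;> linarith

lemma g_supp {A0 : ℝ} (ha : ∀ i, a i ≠ 0) (hA : ∑ i, |a i| ≤ A0) (hl : l.Nodup) (hne : l ≠ [])
    (ht : A0 < |t|) : g p a ω lev l t = 0 := by
  by_contra hc
  have : gl p a ω lev l t ≠ 0 := by
    intro h; exact hc (by simp [g, h])
  obtain ⟨y, hy, hs⟩ := gl_support hl hne this
  have hb : ∀ i ∈ l, |y i| ≤ |a i| := by
    intro i hi
    have := (phi_ne_zero (hy i hi)).1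
    have h1 : |y i / a i| ≤ 1 := by
      rw [abs_le]; constructor <;> linarith [this.1, this.2]
    rw [abs_div, div_le_one (abs_pos.2 (ha i))] at h1
    exact h1
  have : |t| ≤ A0 := by
    rw [← hs, ← List.sum_toFinset _ hl]
    refine (Finset.abs_sum_le_sum_abs _ _).trans ?_
    refine (Finset.sum_le_sum fun i hi => hb i (List.mem_toFinset.1 hi)).trans ?_
    exact (Finset.sum_le_sum_of_subset_of_nonneg (Finset.subset_univ _)
      (fun _ _ _ => abs_nonneg _)).trans hA
  linarith

/-- mixed levels -/
def lv (U : Finset (Fin d)) (n : ℕ) : Fin d → ℕ := fun i => if i ∈ U then n + 1 else n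

lemma lv_or (U : Finset (Fin d)) (n : ℕ) (i : Fin d) : lv U n i = n ∨ lv U n i = n + 1 := by
  unfold lv; split_ifs <;> simp

lemma lv_le (U : Finset (Fin d)) (n : ℕ) (i : Fin d) : lv U n i ≤ n + 1 := by
  rcases lv_or U n i with h | h <;> omega

/-- deterministic variance bound -/
lemma var_bound {C G ρ : ℝ} {U : Finset (Fin d)} (ha : ∀ i, a i ≠ 0) (hpM : ∀ i, (p i)⁻¹ ≤ M)
    (hp0 : ∀ i, 0 < p i) (hl : l ≠ []) (hi : i ∉ l) (hU : i ∉ U) (hρ : 0 ≤ ρ) (hC : 0 ≤ C)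
    (hb : ∀ t, g p a ω (fun _ => n) l t ≤ C * (ρ * (p i * M)) ^ n) 
    (hG : ∀ t, g p a ω (fun _ => n) (i :: l) t ≤ G) :
    ∑ q ∈ TT M i n, (cw p a ω (lv U n) l i n t q.2).toReal ^ 2 ≤
      (|a i| * (M : ℝ) ^ l.length * C * ρ ^ n) * ((M : ℝ) ^ (l.length + 1) * G) := by
  have hM0 : (0 : ℝ) < M := Mpos
  have hM1 : (1 : ℝ) ≤ M := by exact_mod_cast Nat.pos_of_neZero M
  have hpi := hp0 i
  rw [TT, Finset.sum_map]
  simp only [Function.Embedding.sectR_apply]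
  set B := |a i| * (M : ℝ) ^ l.length * C * ρ ^ n
  have hB0 : 0 ≤ B := by positivity
  have hB : ∀ w ∈ WW M n, (cw p a ω (lv U n) l i n t w).toReal ≤ B := by
    intro w hw
    have hgl : ∀ t, gl p a ω (lv U n) l t ≤
        ENNReal.ofReal ((M : ℝ) ^ l.length * (C * (ρ * (p i * M)) ^ n)) := by
      intro t
      rw [ofReal_g ha hpM]
      refine ENNReal.ofReal_le_ofReal ((g_mono ha hpM (lv_or U n)).trans ?_)
      gcongr
      exact hb t
    refine ENNReal.toReal_le_of_le_ofReal hB0 ((cw_le ha hgl hw).trans ?_)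
    rw [← ENNReal.ofReal_pow (by positivity), ← ENNReal.ofReal_mul (by positivity),
      ← ENNReal.ofReal_mul (by positivity)]
    refine ENNReal.ofReal_le_ofReal ?_
    have : (p i)⁻¹ ^ n * ((M : ℝ) ^ l.length * (C * (ρ * (p i * M)) ^ n)) *
        (|a i| * ((M : ℝ) ^ (n + 1))⁻¹) = B * (M : ℝ)⁻¹ := by
      simp only [B]
      rw [inv_pow, mul_pow, mul_pow, pow_succ]
      field_simp
    rw [this]
    exact mul_le_of_le_one_right hB0 (inv_le_one_of_one_le₀ hM1)
  have hS : ∑ w ∈ WW M n, (cw p a ω (lv U n) l i n t w).toReal ≤ (M : ℝ) ^ (l.length + 1) * G := by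
    rw [← ENNReal.toReal_sum fun w hw => cw_ne_top ha hpM hl hw hi,
      ← gl_sum_cw hl (by simp [lv, hU])]
    refine (g_mono (l := i :: l) ha hpM (lv_or U n)).trans ?_
    rw [List.length_cons]
    gcongr
    exact hG t
  calc ∑ w ∈ WW M n, (cw p a ω (lv U n) l i n t w).toReal ^ 2
      ≤ ∑ w ∈ WW M n, B * (cw p a ω (lv U n) l i n t w).toReal := by
        refine Finset.sum_le_sum fun w hw => ?_
        rw [sq]
        gcongr
        exact hB w hw
    _ ≤ _ := by
        rw [← Finset.mul_sum]
        gcongr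

variable {P : Measure (Fin d × Word1 M → Bool)} [IsProbabilityMeasure P]

lemma substep {θ r : ℝ} {U : Finset (Fin d)} (hP : IsBern (fun q : Fin d × Word1 M => p q.1) P)
    (ha : ∀ i, a i ≠ 0) (hpM : ∀ i, (p i)⁻¹ ≤ M) (hp0 : ∀ i, 0 < p i) (hp1 : ∀ i, p i ≤ 1)
    (hl : l ≠ []) (hnd : (i :: l).Nodup) (hU : i ∉ U) (hθ : 0 < θ) (hr : 1 < r)
    (H : ∀ᵐ ω ∂P, ∃ C : ℝ, ∀ᶠ n in Filter.atTop, ∀ t,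
      g p a ω (fun _ => n) l t ≤ C * (θ * (p i * M)) ^ n) :
    ∀ᵐ ω ∂P, ∃ A : ℝ, 0 ≤ A ∧ ∀ᶠ n in Filter.atTop, ∀ G : ℝ,
      (∀ t, g p a ω (fun _ => n) (i :: l) t ≤ G) → ∀ t,
      |g p a ω (lv (insert i U) n) (i :: l) t - g p a ω (lv U n) (i :: l) t| ≤
        A * ((r⁻¹) ^ n * G + (θ * r ^ 2) ^ n) := by
  have hi := (List.nodup_cons.1 hnd).1
  have hM0 : (0 : ℝ) < M := Mpos
  have hM1 : (1 : ℝ) ≤ M := by exact_mod_cast Nat.pos_of_neZero M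
  have hr0 : 0 < r := by linarith
  obtain ⟨A0, hA0⟩ := exists_nat_ge (1 + ∑ i, |a i|)
  have hsn : 0 ≤ ∑ i, |a i| := Finset.sum_nonneg fun _ _ => abs_nonneg _
  have hA1 : (1 : ℝ) ≤ A0 := by linarith
  have hAi : ∀ i, |a i| ≤ A0 := fun i => by
    have := Finset.single_le_sum (f := fun j => |a j|) (fun j _ => abs_nonneg _) (Finset.mem_univ i)
    linarith
  obtain ⟨κ, hκ⟩ := exists_nat_ge (max 1 ((M : ℝ) ^ (2 + l.length) / (θ * r ^ 2)))
  have hκ1 : (1 : ℝ) ≤ κ := (le_max_left _ _).trans hκ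
  have hκ0 : (0 : ℝ) < κ := by linarith
  have hκ2 : (M : ℝ) ^ (2 + l.length) * (κ : ℝ)⁻¹ ≤ θ * r ^ 2 := by
    have := (le_max_right _ _).trans hκ
    rw [div_le_iff₀ (by positivity)] at this
    rw [← div_eq_mul_inv, div_le_iff₀ hκ0]
    linarith
  set D : ℝ := (M : ℝ) ^ (2 + l.length) * A0 ^ l.length with hD
  have hD0 : 0 ≤ D := by positivity
  have hBC := bc_dev (K := M) hP (fun q => hp0 q.1) (fun q => hp1 q.1) (fun q => hpM q.1)
    (fun n => TT M i n) (fun n => Finset.Icc (-((A0 * κ ^ n : ℕ) : ℤ)) ((A0 * κ ^ n : ℕ) : ℤ))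
    (fun n k q ω => (cw p a ω (lv U n) l i n (k / (κ : ℝ) ^ n) q.2).toReal)
    (fun n k q => cw_measurable q.2) (fun n k q _ => cw_dep hi q.2) hθ hr hκ0
    (C := 2 * A0 + 1) (fun n => by
      rw [Int.card_Icc]
      have : (((A0 * κ ^ n : ℕ) : ℤ) + 1 - -((A0 * κ ^ n : ℕ) : ℤ)).toNat = 2 * (A0 * κ ^ n) + 1 := by
        omega
      rw [this]
      push_cast
      have : (1 : ℝ) ≤ κ ^ n := one_le_pow₀ hκ1
      nlinarith)
  filter_upwards [H, hBC] with ω ⟨C, hC⟩ hω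
  refine ⟨(M : ℝ) ^ 2 * (|a i| * (M : ℝ) ^ l.length * |C| * (M : ℝ) ^ (l.length + 1)) + 1 + 2 * D,
    by positivity, ?_⟩
  filter_upwards [hC, hω] with n hCn hωn G hG t
  have hG0 : 0 ≤ G := g_nonneg.trans (hG 0)
  have hCn' : ∀ t, g p a ω (fun _ => n) l t ≤ |C| * (θ * (p i * M)) ^ n := by
    intro t
    refine (hCn t).trans ?_
    have := hp0 i
    gcongr
    exact le_abs_self C
  have hlip : ∀ V : Finset (Fin d), ∀ t s : ℝ, |t - s| ≤ ((κ : ℝ)⁻¹) ^ n →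
      |g p a ω (lv V n) (i :: l) t - g p a ω (lv V n) (i :: l) s| ≤ D * (θ * r ^ 2) ^ n := by
    intro V t s hts
    refine (g_lip (G := ((M : ℝ) ^ (n + 1) * A0) ^ l.length) ha hpM hl (by positivity)
      (fun t => g_crude hA1 ha hAi hpM (lv_le V n)) t s).trans ?_
    calc (M : ℝ) ^ lv V n i * (M : ℝ) ^ lv V n i * ((M : ℝ) ^ (n + 1) * A0) ^ l.length * |t - s|
        ≤ (M : ℝ) ^ (n + 1) * (M : ℝ) ^ (n + 1) * ((M : ℝ) ^ (n + 1) * A0) ^ l.length *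
          ((κ : ℝ)⁻¹) ^ n := by
          have := pow_le_pow_right₀ hM1 (lv_le V n i)
          gcongr
      _ = D * ((M : ℝ) ^ (2 + l.length) * (κ : ℝ)⁻¹) ^ n := by
          rw [hD, mul_pow, mul_pow, ← pow_mul, ← pow_mul]
          ring
      _ ≤ _ := by gcongr
  by_cases ht : A0 < |t|
  · rw [g_supp ha (by linarith) hnd (by simp) ht, g_supp ha (by linarith) hnd (by simp) ht]
    simp only [sub_zero, abs_zero]
    positivity
  push Not at ht
  set k : ℤ := ⌊t * κ ^ n⌋ with hk
  have hκn : (0 : ℝ) < κ ^ n := by positivity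
  have hkJ : k ∈ Finset.Icc (-((A0 * κ ^ n : ℕ) : ℤ)) ((A0 * κ ^ n : ℕ) : ℤ) := by
    rw [abs_le] at ht
    rw [Finset.mem_Icc]
    constructor
    · rw [hk, Int.le_floor]
      push_cast
      nlinarith [ht.1]
    · rw [← Int.cast_le (R := ℝ)]
      refine (Int.floor_le _).trans ?_
      push_cast
      nlinarith [ht.2]
  have hts : |t - k / (κ : ℝ) ^ n| ≤ ((κ : ℝ)⁻¹) ^ n := by
    have h1 := Int.floor_le (t * (κ : ℝ) ^ n)
    have h2 := (Int.lt_floor_add_one (t * (κ : ℝ) ^ n)).le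
    rw [← hk] at h1 h2
    have e : t - k / (κ : ℝ) ^ n = (t * κ ^ n - k) * ((κ : ℝ)⁻¹) ^ n := by
      rw [inv_pow]; field_simp
    rw [e, abs_mul, abs_of_nonneg (by linarith), abs_of_nonneg (by positivity)]
    exact mul_le_of_le_one_left (by positivity) (by linarith)
  set s := (k : ℝ) / (κ : ℝ) ^ n
  have h1 := hωn k hkJ
  rw [← g_diff (lev' := lv (insert i U) n) ha hpM hp0 hl hi (by simp [lv, hU]) (by simp [lv])
    (fun j hj => by
      have : j ≠ i := by rintro rfl; exact hi hj
      simp [lv, this])] at h1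
  have h2 := var_bound (t := s) ha hpM hp0 hl hi hU hθ.le (abs_nonneg C) hCn' hG
  have h3 := hlip U t s hts
  have h4 := hlip (insert i U) t s hts
  have h5 : (M : ℝ) ^ 2 * ((θ * r)⁻¹) ^ n *
      (∑ q ∈ TT M i n, (cw p a ω (lv U n) l i n s q.2).toReal ^ 2) ≤
      (M : ℝ) ^ 2 * (|a i| * (M : ℝ) ^ l.length * |C| * (M : ℝ) ^ (l.length + 1)) *
        ((r⁻¹) ^ n * G) := by
    calc _ ≤ (M : ℝ) ^ 2 * ((θ * r)⁻¹) ^ n * ((|a i| * (M : ℝ) ^ l.length * |C| * θ ^ n) *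
          ((M : ℝ) ^ (l.length + 1) * G)) := by gcongr
      _ = _ := by
        rw [mul_inv, mul_pow, inv_pow θ]
        field_simp
  set E := (M : ℝ) ^ 2 * (|a i| * (M : ℝ) ^ l.length * |C| * (M : ℝ) ^ (l.length + 1))
  have hE : 0 ≤ E := by positivity
  have hx : 0 ≤ (r⁻¹) ^ n * G := by positivity
  have hy : 0 ≤ (θ * r ^ 2) ^ n := by positivity
  have h6 := h1.trans (add_le_add_left h5 _)
  rw [abs_le] at h3 h4 h6 ⊢
  have h7 : E * ((r⁻¹) ^ n * G) + (θ * r ^ 2) ^ n + 2 * (D * (θ * r ^ 2) ^ n) ≤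
      (E + 1 + 2 * D) * ((r⁻¹) ^ n * G + (θ * r ^ 2) ^ n) := by
    nlinarith [mul_nonneg hD0 hx, mul_nonneg hE hy]
  constructor <;> linarith [h3.1, h3.2, h4.1, h4.2, h6.1, h6.2]

lemma step {θ r : ℝ} (hP : IsBern (fun q : Fin d × Word1 M => p q.1) P)
    (ha : ∀ i, a i ≠ 0) (hpM : ∀ i, (p i)⁻¹ ≤ M) (hp0 : ∀ i, 0 < p i) (hp1 : ∀ i, p i ≤ 1)
    (hl : 2 ≤ l.length) (hnd : l.Nodup) (hθ : 0 < θ) (hr : 1 < r)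
    (H : ∀ i ∈ l, ∀ᵐ ω ∂P, ∃ C : ℝ, ∀ᶠ n in Filter.atTop, ∀ t,
      g p a ω (fun _ => n) (l.erase i) t ≤ C * (θ * (p i * M)) ^ n) :
    ∀ᵐ ω ∂P, ∃ A : ℝ, 0 ≤ A ∧ ∀ᶠ n in Filter.atTop, ∀ G : ℝ,
      (∀ t, g p a ω (fun _ => n) l t ≤ G) → ∀ t,
      |g p a ω (fun _ => n + 1) l t - g p a ω (fun _ => n) l t| ≤
        A * ((r⁻¹) ^ n * G + (θ * r ^ 2) ^ n) := by
  have hr0 : 0 < r := by linarith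
  suffices h : ∀ U : Finset (Fin d), ∀ᵐ ω ∂P, ∃ A : ℝ, 0 ≤ A ∧ ∀ᶠ n in Filter.atTop, ∀ G : ℝ,
      (∀ t, g p a ω (fun _ => n) l t ≤ G) → ∀ t,
      |g p a ω (lv U n) l t - g p a ω (fun _ => n) l t| ≤
        A * ((r⁻¹) ^ n * G + (θ * r ^ 2) ^ n) by
    have := h Finset.univ
    have e : ∀ n, lv (Finset.univ : Finset (Fin d)) n = fun _ => n + 1 := fun n => by
      funext i; simp [lv]
    simpa only [e] using this
  intro U
  induction U using Finset.induction_on with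
  | empty =>
    have e : ∀ n, lv (∅ : Finset (Fin d)) n = fun _ => n := fun n => by
      funext i; simp [lv]
    refine Filter.Eventually.of_forall fun ω => ⟨0, le_rfl, Filter.Eventually.of_forall fun n => ?_⟩
    intro G _ t
    simp [e]
  | insert i U hU ih =>
    by_cases hil : i ∈ l
    · have hpm := List.perm_cons_erase hil
      have hne : l.erase i ≠ [] := by
        intro h
        have := List.length_erase_of_mem hil
        rw [h] at this
        simp at this; omega
      have hs := substep (U := U) (i := i) (l := l.erase i) (r := r) hP ha hpM hp0 hp1 hne
        (hpm.nodup_iff.1 hnd) hU hθ hr (H i hil)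
      simp only [g_perm hpm.symm] at hs
      filter_upwards [ih, hs] with ω ⟨A, hA, h1⟩ ⟨B, hB, h2⟩
      refine ⟨A + B, by positivity, ?_⟩
      filter_upwards [h1, h2] with n h1 h2 G hG t
      have h1 := h1 G hG t
      have h2 := h2 G hG t
      rw [add_mul]
      rw [abs_le] at h1 h2 ⊢
      constructor <;> linarith [h1.1, h1.2, h2.1, h2.2]
    · filter_upwards [ih] with ω ⟨A, hA, h1⟩
      refine ⟨A, hA, ?_⟩
      filter_upwards [h1] with n h1 G hG t
      have : g p a ω (lv (insert i U) n) l t = g p a ω (lv U n) l t := by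
        unfold g
        rw [gl_lev_congr]
        intro j hj
        have : j ≠ i := by rintro rfl; exact hil hj
        simp [lv, this]
      rw [this]
      exact h1 G hG t

end stepr

lemma growth_det {f : ℕ → ℝ → ℝ} {A r ρ : ℝ} (hA : 0 ≤ A) (hr : 1 < r) (hρ : 1 < ρ)
    (h : ∀ᶠ n in Filter.atTop, ∀ G : ℝ, (∀ t, f n t ≤ G) → ∀ t,
      |f (n + 1) t - f n t| ≤ A * ((r⁻¹) ^ n * G + ρ ^ n))
    (hB : ∀ n, ∃ B, ∀ t, f n t ≤ B) : ∃ C, ∀ᶠ n in Filter.atTop, ∀ t, f n t ≤ C * ρ ^ n := by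
  have hr0 : 0 < r := by linarith
  have h2 : ∀ᶠ n : ℕ in Filter.atTop, A * (r⁻¹) ^ n ≤ (ρ - 1) / 2 := by
    have : Filter.Tendsto (fun n : ℕ => A * (r⁻¹) ^ n) Filter.atTop (nhds (A * 0)) :=
      (tendsto_pow_atTop_nhds_zero_of_lt_one (by positivity) (inv_lt_one_of_one_lt₀ hr)).const_mul A
    rw [mul_zero] at this
    exact (this.eventually_lt_const (by linarith)).mono fun _ h => h.le
  obtain ⟨N, hN⟩ := Filter.eventually_atTop.1 (h.and h2)
  obtain ⟨B, hB⟩ := hB N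
  set C := max (max B 0) (2 * A / (ρ - 1)) with hC
  have hC0 : 0 ≤ C := (le_max_right _ _).trans (le_max_left _ _)
  have hC1 : B ≤ C := (le_max_left _ _).trans (le_max_left _ _)
  have hC2 : A ≤ C * (ρ - 1) / 2 := by
    have : 2 * A / (ρ - 1) ≤ C := le_max_right _ _
    rw [div_le_iff₀ (by linarith)] at this
    linarith
  refine ⟨C, Filter.eventually_atTop.2 ⟨N, fun n hn => ?_⟩⟩
  induction n, hn using Nat.le_induction with
  | base =>
    intro t
    have : 1 ≤ ρ ^ N := one_le_pow₀ hρ.le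
    exact ((hB t).trans hC1).trans (le_mul_of_one_le_right hC0 this)
  | succ n hn ih =>
    intro t
    have h3 := (abs_le.1 ((hN n hn).1 _ ih t)).2
    have h4 := (hN n hn).2
    have h5 := ih t
    have hρn : 0 < ρ ^ n := by positivity
    have h6 : A * (r⁻¹) ^ n * (C * ρ ^ n) ≤ (ρ - 1) / 2 * (C * ρ ^ n) := by gcongr
    have h7 : A * ρ ^ n ≤ C * (ρ - 1) / 2 * ρ ^ n := by gcongr
    rw [pow_succ]
    nlinarith

section grow
variable {d M : ℕ} [NeZero M] {p a : Fin d → ℝ}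
  {P : Measure (Fin d × Word1 M → Bool)} [IsProbabilityMeasure P]

lemma growth (hP : IsBern (fun q : Fin d × Word1 M => p q.1) P)
    (ha : ∀ i, a i ≠ 0) (hpM : ∀ i, (p i)⁻¹ ≤ M) (hp0 : ∀ i, 0 < p i) (hp1 : ∀ i, p i ≤ 1)
    (hm : ∀ i, 1 < p i * M) (m : ℕ) : ∀ (l : List (Fin d)), l.length = m + 1 → l.Nodup →
    ∀ ρ : ℝ, 1 < ρ → (M : ℝ) < ρ * (l.map fun i => p i * M).prod →
    ∀ᵐ ω ∂P, ∃ C : ℝ, ∀ᶠ n in Filter.atTop, ∀ t, g p a ω (fun _ => n) l t ≤ C * ρ ^ n := by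
  have hM0 : (0 : ℝ) < M := Mpos
  induction m with
  | zero =>
    intro l hlen _ ρ hρ hρM
    obtain ⟨i, rfl⟩ := List.length_eq_one_iff.1 hlen
    refine Filter.Eventually.of_forall fun ω => ⟨1, Filter.Eventually.of_forall fun n t => ?_⟩
    simp only [List.map_cons, List.map_nil, List.prod_cons, List.prod_nil, mul_one] at hρM
    have hpi := hp0 i
    have h1 : (p i)⁻¹ ≤ ρ := by
      rw [inv_le_iff_one_le_mul₀ hpi]
      have : (1 : ℝ) * M < ρ * p i * M := by linarith
      exact (lt_of_mul_lt_mul_right this hM0.le).le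
    rw [one_mul]
    refine ENNReal.toReal_le_of_le_ofReal (by positivity) ?_
    refine (phi_le (M := M)).trans ?_
    rw [ENNReal.ofReal_pow (by positivity)]
    gcongr
  | succ m ih =>
    intro l hlen hnd ρ hρ hρM
    set PP := (l.map fun i => p i * M).prod with hPP
    have hPP0 : 0 < PP := by
      refine List.prod_pos fun x hx => ?_
      obtain ⟨i, _, rfl⟩ := List.mem_map.1 hx
      exact mul_pos (hp0 i) hM0
    have hmax : max 1 (M / PP) < ρ := max_lt hρ (by rwa [div_lt_iff₀ hPP0])
    obtain ⟨θ, hθ1, hθ2⟩ := exists_between hmax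
    have hθ3 : 1 < θ := (le_max_left _ _).trans_lt hθ1
    have hθ4 : M < θ * PP := by
      rw [← div_lt_iff₀ hPP0]; exact (le_max_right _ _).trans_lt hθ1
    have hθ0 : 0 < θ := by linarith
    have hq : 1 < ρ / θ := by rwa [one_lt_div hθ0]
    set r := √(ρ / θ)
    have hr : 1 < r := by rw [Real.lt_sqrt (by norm_num)]; simpa using hq
    have hrr : θ * r ^ 2 = ρ := by
      rw [Real.sq_sqrt (by positivity)]; field_simp
    have hs := step (l := l) (a := a) (θ := θ) (r := r) hP ha hpM hp0 hp1 (by omega) hnd hθ0 hr (by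
      intro i hi
      refine ih (l.erase i) ?_ (hnd.erase i) _ ?_ ?_
      · rw [List.length_erase_of_mem hi]; omega
      · nlinarith [hm i]
      · have : PP = p i * M * ((l.erase i).map fun i => p i * M).prod := by
          rw [hPP, ((List.perm_cons_erase hi).map _).prod_eq, List.map_cons, List.prod_cons]
        rw [mul_assoc, ← this]
        exact hθ4)
    rw [hrr] at hs
    filter_upwards [hs] with ω ⟨A, hA, h⟩
    refine growth_det hA hr hρ h fun n => ?_
    refine ⟨((M : ℝ) ^ n * (1 + ∑ i, |a i|)) ^ l.length, fun t => g_crude ?_ ha ?_ hpM fun _ => le_rfl⟩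
    · have := Finset.sum_nonneg (fun j (_ : j ∈ Finset.univ) => abs_nonneg (a j))
      linarith
    · intro i
      have := Finset.single_le_sum (f := fun j => |a j|) (fun j _ => abs_nonneg _) (Finset.mem_univ i)
      linarith

lemma exists_theta {ι : Type*} [Finite ι] (c : ι → ℝ) (hc : ∀ i, 1 < c i) :
    ∃ θ : ℝ, 0 < θ ∧ θ < 1 ∧ ∀ i, 1 < θ * c i := by
  have h1 : ∀ᶠ θ : ℝ in nhdsWithin 1 (Iio 1), ∀ i, 1 < θ * c i := by
    rw [Filter.eventually_all]
    intro i
    have : Filter.Tendsto (fun θ : ℝ => θ * c i) (nhdsWithin 1 (Iio 1)) (nhds (1 * c i)) :=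
      ((continuous_mul_const (c i)).tendsto 1).mono_left nhdsWithin_le_nhds
    rw [one_mul] at this
    exact this.eventually_const_lt (hc i)
  have h2 : ∀ᶠ θ : ℝ in nhdsWithin 1 (Iio 1), 0 < θ :=
    nhdsWithin_le_nhds (lt_mem_nhds (by norm_num))
  obtain ⟨θ, ⟨h1, h2⟩, h3⟩ := ((h1.and h2).and self_mem_nhdsWithin).exists
  exact ⟨θ, h2, h3, h1⟩

lemma exists_rr {θ : ℝ} (h0 : 0 < θ) (h1 : θ < 1) : ∃ r : ℝ, 1 < r ∧ θ * r ^ 2 < 1 := by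
  obtain ⟨x, hx1, hx2⟩ := exists_between (one_lt_one_div h0 h1)
  refine ⟨√x, by rw [Real.lt_sqrt (by norm_num)]; simpa using hx1, ?_⟩
  rw [Real.sq_sqrt (by linarith)]
  rw [lt_div_iff₀ h0] at hx2
  linarith

lemma conv_full (hP : IsBern (fun q : Fin d × Word1 M => p q.1) P)
    (ha : ∀ i, a i ≠ 0) (hpM : ∀ i, (p i)⁻¹ ≤ M) (hp0 : ∀ i, 0 < p i) (hp1 : ∀ i, p i ≤ 1)
    (hm : ∀ i, 1 < p i * M) {l : List (Fin d)} (hlen : 2 ≤ l.length) (hnd : l.Nodup)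
    (hprod : (M : ℝ) < (l.map fun i => p i * M).prod) :
    ∀ᵐ ω ∂P, ∃ A q : ℝ, 0 ≤ q ∧ q < 1 ∧ ∀ᶠ n in Filter.atTop, ∀ t,
      |g p a ω (fun _ => n + 1) l t - g p a ω (fun _ => n) l t| ≤ A * q ^ n := by
  have hM0 : (0 : ℝ) < M := Mpos
  set PP := (l.map fun i => p i * M).prod with hPP
  obtain ⟨θ, hθ0, hθ1, hθ⟩ := exists_theta (fun o : Option (Fin d) => o.elim (PP / M) fun i => p i * M)
    (by
      rintro (_ | i)
      · simpa using (one_lt_div hM0).2 hprod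
      · exact hm i)
  have hθPP : (M : ℝ) < θ * PP := by
    have := hθ none
    simp only [Option.elim] at this
    rw [← mul_div_assoc, one_lt_div hM0] at this
    exact this
  have hθi : ∀ i, 1 < θ * (p i * M) := fun i => hθ (some i)
  obtain ⟨r, hr, hrr⟩ := exists_rr hθ0 hθ1
  have hr0 : 0 < r := by linarith
  obtain ⟨ρ, hρ1, hρ2⟩ := exists_between hr
  have hs := step (l := l) (a := a) (θ := θ) (r := r) hP ha hpM hp0 hp1 hlen hnd hθ0 hr (by
    intro i hi
    refine growth hP ha hpM hp0 hp1 hm (l.length - 2) (l.erase i) ?_ (hnd.erase i) _ (hθi i) ?_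
    · rw [List.length_erase_of_mem hi]; omega
    · have : PP = p i * M * ((l.erase i).map fun i => p i * M).prod := by
        rw [hPP, ((List.perm_cons_erase hi).map _).prod_eq, List.map_cons, List.prod_cons]
      rw [mul_assoc, ← this]
      exact hθPP)
  have hg := growth (a := a) hP ha hpM hp0 hp1 hm (l.length - 1) l (by omega) hnd ρ hρ1 (by
    rw [← hPP]; nlinarith)
  filter_upwards [hs, hg] with ω ⟨A, hA, h1⟩ ⟨C, h2⟩
  refine ⟨A * (|C| + 1), max (ρ / r) (θ * r ^ 2), le_max_of_le_right (by positivity),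
    max_lt ((div_lt_one hr0).2 hρ2) hrr, ?_⟩
  filter_upwards [h1, h2] with n h1 h2 t
  refine (h1 (C * ρ ^ n) h2 t).trans ?_
  rw [mul_assoc]
  gcongr
  set q := max (ρ / r) (θ * r ^ 2)
  have e1 : (r⁻¹) ^ n * (C * ρ ^ n) = C * (ρ / r) ^ n := by rw [div_pow, inv_pow]; ring
  rw [e1, add_mul, one_mul]
  have hq1 : (ρ / r) ^ n ≤ q ^ n := by gcongr; exact le_max_left _ _
  have hq2 : (θ * r ^ 2) ^ n ≤ q ^ n := by gcongr; exact le_max_right _ _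
  have : C * (ρ / r) ^ n ≤ |C| * (ρ / r) ^ n := by gcongr; exact le_abs_self C
  have : |C| * (ρ / r) ^ n ≤ |C| * q ^ n := by gcongr
  linarith

end grow

section mass
variable {d M : ℕ} [NeZero M] {p : Fin d → ℝ} {ω ω' : Fin d × Word1 M → Bool} {i : Fin d} {n : ℕ}

/-- mass in a cell -/
def zw (p : Fin d → ℝ) (ω : Fin d × Word1 M → Bool) (i : Fin d) (n : ℕ) (w : Word1 M) : ℝ≥0∞ :=
  ∫⁻ x, (cell M w.1).indicator (phi p ω i n) x

/-- indicator of a living cell -/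
def bb (p : Fin d → ℝ) (ω : Fin d × Word1 M → Bool) (i : Fin d) (n : ℕ) (w : Word1 M) : ℕ :=
  if zw p ω i n w = 0 then 0 else 1

/-- number of living cells -/
def NN (p : Fin d → ℝ) (ω : Fin d × Word1 M → Bool) (i : Fin d) (n : ℕ) : ℕ :=
  ∑ w ∈ WW M n, bb p ω i n w

/-- mass of a living cell -/
def vv (M : ℕ) (p : Fin d → ℝ) (i : Fin d) (n : ℕ) : ℝ := ((p i) ^ n * (M : ℝ) ^ (n + 1))⁻¹

/-- total mass -/
def Z (p : Fin d → ℝ) (ω : Fin d × Word1 M → Bool) (i : Fin d) (n : ℕ) : ℝ :=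
  (∫⁻ x, phi p ω i n x).toReal

lemma vv_pos (hp0 : ∀ i, 0 < p i) : 0 < vv M p i n := by
  have : (0 : ℝ) < M := Mpos
  have := hp0 i
  unfold vv; positivity

lemma bb_le (w : Word1 M) : bb p ω i n w ≤ 1 := by unfold bb; split_ifs <;> simp

lemma zw_eq (hp0 : ∀ i, 0 < p i) {w : Word1 M} (hw : w ∈ WW M n) :
    zw p ω i n w = bb p ω i n w * ENNReal.ofReal (vv M p i n) := by
  have hM0 : (0 : ℝ) < M := Mpos
  have hpi := hp0 i
  unfold bb
  split_ifs with h
  · simp [h]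
  rw [mem_WW] at hw
  obtain ⟨x, hx, hx0⟩ : ∃ x ∈ cell M w.1, phi p ω i n x ≠ 0 := by
    by_contra hc
    push Not at hc
    apply h
    unfold zw
    rw [lintegral_congr (g := fun _ => 0), lintegral_zero]
    intro x
    by_cases hx : x ∈ cell M w.1
    · rw [Set.indicator_of_mem hx, hc x hx]
    · rw [Set.indicator_of_notMem hx]
  have hv := (phi_cases (p := p) (ω := ω) (i := i) (n := n) (x := x)).resolve_left hx0
  unfold zw
  have : (cell M w.1).indicator (phi p ω i n) =
      (cell M w.1).indicator fun _ => ENNReal.ofReal (p i)⁻¹ ^ n := by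
    refine Set.indicator_congr fun y hy => ?_
    rw [← hv]
    exact phi_const (by omega) hy hx
  rw [this, lintegral_indicator (measurableSet_cell _), setLIntegral_const, cell_eq, Real.volume_Ico,
    hw, ← ENNReal.ofReal_pow (by positivity), ← ENNReal.ofReal_mul (by positivity)]
  simp only [Nat.cast_one, one_mul, add_sub_cancel_left]
  congr 1
  rw [vv, mul_inv, inv_pow]

lemma mass_sum : ∫⁻ x, phi p ω i n x = ∑ w ∈ WW M n, zw p ω i n w := by
  unfold zw
  rw [← lintegral_finsetSum _ fun w _ => measurable_phi.indicator (measurableSet_cell _)]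
  exact lintegral_congr fun x => phi_sum

lemma mass_succ_sum : ∫⁻ x, phi p ω i (n + 1) x = ∑ w ∈ WW M n, xi p ω (i, w) * zw p ω i n w := by
  unfold zw
  simp_rw [← lintegral_const_mul _ (measurable_phi.indicator (measurableSet_cell _))]
  rw [← lintegral_finsetSum _ fun w _ =>
    (measurable_phi.indicator (measurableSet_cell _)).const_mul _]
  exact lintegral_congr fun x => phi_succ_sum

lemma mass_eq (hp0 : ∀ i, 0 < p i) :
    ∫⁻ x, phi p ω i n x = NN p ω i n * ENNReal.ofReal (vv M p i n) := by
  rw [mass_sum, Finset.sum_congr rfl fun w hw => zw_eq hp0 hw, ← Finset.sum_mul, NN]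
  push_cast; rfl

lemma mass_ne_top (hp0 : ∀ i, 0 < p i) : ∫⁻ x, phi p ω i n x ≠ ∞ := by
  rw [mass_eq hp0]
  exact ENNReal.mul_ne_top (by simp) (by simp)

lemma Z_eq (hp0 : ∀ i, 0 < p i) : Z p ω i n = NN p ω i n * vv M p i n := by
  unfold Z
  rw [mass_eq hp0, ENNReal.toReal_mul, ENNReal.toReal_ofReal (vv_pos hp0).le]
  simp

lemma NN_zero (hp0 : ∀ i, 0 < p i) : NN p ω i 0 = M := by
  have hM0 : (0 : ℝ) < M := Mpos
  have h := Z_eq (ω := ω) (i := i) (n := 0) hp0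
  have h1 : Z p ω i 0 = 1 := by
    unfold Z
    rw [lintegral_congr (fun x => phi_zero), lintegral_indicator_one measurableSet_Ico]
    simp
  rw [h1, vv] at h
  field_simp at h
  simp only [pow_zero, zero_add, pow_one, one_mul] at h
  exact_mod_cast h.symm

lemma NN_succ (hp0 : ∀ i, 0 < p i) : NN p ω i (n + 1) =
    M * ∑ w ∈ WW M n, if ω (i, w) then bb p ω i n w else 0 := by
  have hM0 : (0 : ℝ) < M := Mpos
  have hpi := hp0 i
  have h := mass_eq (ω := ω) (i := i) (n := n + 1) hp0
  rw [mass_succ_sum, Finset.sum_congr rfl fun w hw => by rw [zw_eq hp0 hw]] at h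
  have hx : ∀ w : Word1 M, xi p ω (i, w) * ((bb p ω i n w : ℝ≥0∞) * ENNReal.ofReal (vv M p i n)) =
      ((if ω (i, w) then bb p ω i n w else 0 : ℕ) : ℝ≥0∞) *
        ENNReal.ofReal ((p i)⁻¹ * vv M p i n) := by
    intro w
    unfold xi
    split_ifs
    · rw [ENNReal.ofReal_mul (by positivity)]; ring
    · simp
  simp_rw [hx] at h
  rw [← Finset.sum_mul, ← Nat.cast_sum] at h
  have hv : (p i)⁻¹ * vv M p i n = M * vv M p i (n + 1) := by
    unfold vv
    field_simp
    ring
  rw [hv, ENNReal.ofReal_mul (by positivity), ENNReal.ofReal_natCast, ← mul_assoc] at h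
  have h2 := (ENNReal.mul_left_inj (by simpa using vv_pos hp0) (by simp)).1 h
  rw [mul_comm]
  exact_mod_cast h2.symm

lemma zw_congr (h : ∀ w : Word1 M, w.1.length ≤ n → ω (i, w) = ω' (i, w)) (w : Word1 M) :
    zw p ω i n w = zw p ω' i n w := by
  unfold zw; rw [phi_congr h]

lemma dep_meas {β : Type*} [MeasurableSpace β] [Nonempty β] {f : (Fin d × Word1 M → Bool) → β}
    (h : ∀ ω ω' : Fin d × Word1 M → Bool,
      (∀ w : Word1 M, w.1.length ≤ n → ω (i, w) = ω' (i, w)) → f ω = f ω') : Measurable f := by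
  have hs : ({q : Fin d × Word1 M | q.2.1.length ≤ n}).Finite := by
    have h1 : ({w : Word1 M | w.1.length ≤ n}).Finite :=
      (List.finite_length_le (Fin M) _).preimage Subtype.val_injective.injOn
    exact ((Set.finite_univ (α := Fin d)).prod h1).subset fun q hq => ⟨mem_univ _, hq⟩
  refine measurable_of_dependsOn hs fun ω ω' hω => h ω ω' fun w hw => hω _ hw

lemma dep_TT {β : Type*} {f : (Fin d × Word1 M → Bool) → β}
    (h : ∀ ω ω' : Fin d × Word1 M → Bool,
      (∀ w : Word1 M, w.1.length ≤ n → ω (i, w) = ω' (i, w)) → f ω = f ω') :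
    DependsOn f ((TT M i n : Set (Fin d × Word1 M))ᶜ) := by
  intro ω ω' hω
  refine h ω ω' fun w hw => hω _ ?_
  simp only [TT, Set.mem_compl_iff, Finset.mem_coe, Finset.mem_map, not_exists, not_and]
  rintro x hx hxx
  have : x = w := congrArg Prod.snd hxx
  rw [mem_WW, this] at hx; omega

lemma Z_congr (h : ∀ w : Word1 M, w.1.length ≤ n → ω (i, w) = ω' (i, w)) :
    Z p ω i n = Z p ω' i n := by
  unfold Z; rw [phi_congr h]

lemma bb_congr (h : ∀ w : Word1 M, w.1.length ≤ n → ω (i, w) = ω' (i, w)) (w : Word1 M) :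
    bb p ω i n w = bb p ω' i n w := by
  unfold bb; rw [zw_congr h]

lemma NN_congr (h : ∀ w : Word1 M, w.1.length ≤ n → ω (i, w) = ω' (i, w)) :
    NN p ω i n = NN p ω' i n := by
  unfold NN; simp_rw [bb_congr h]

lemma measurable_NN : Measurable fun ω : Fin d × Word1 M → Bool => NN p ω i n :=
  dep_meas fun _ _ h => NN_congr h

lemma measurable_Z : Measurable fun ω : Fin d × Word1 M → Bool => Z p ω i n :=
  dep_meas fun _ _ h => Z_congr h

lemma Z_diff (hp0 : ∀ i, 0 < p i) : Z p ω i (n + 1) - Z p ω i n =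
    ∑ q ∈ TT M i n, eta (fun q => p q.1) q (ω q) * (zw p ω i n q.2).toReal := by
  have hnt : ∀ w ∈ WW M n, zw p ω i n w ≠ ∞ := fun w hw => by
    rw [zw_eq hp0 hw]; exact ENNReal.mul_ne_top (by simp) (by simp)
  unfold Z
  rw [mass_succ_sum, mass_sum, TT, Finset.sum_map, ENNReal.toReal_sum hnt,
    ENNReal.toReal_sum fun w hw => ENNReal.mul_ne_top (by unfold xi; split_ifs <;> simp) (hnt w hw),
    ← Finset.sum_sub_distrib]
  refine Finset.sum_congr rfl fun w hw => ?_
  rw [ENNReal.toReal_mul, xi_eta hp0]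
  simp only [Function.Embedding.sectR_apply]
  ring

lemma tendsto_of_geom {u : ℕ → ℝ} {A q : ℝ} (hq0 : 0 ≤ q) (hq : q < 1)
    (h : ∀ᶠ n in Filter.atTop, |u (n + 1) - u n| ≤ A * q ^ n) :
    ∃ W, Filter.Tendsto u Filter.atTop (nhds W) := by
  refine cauchySeq_tendsto_of_complete (cauchySeq_of_summable_dist ?_)
  refine Summable.of_norm_bounded_eventually_nat
    ((summable_geometric_of_lt_one hq0 hq).mul_left A) ?_
  filter_upwards [h] with n hn
  rw [Real.norm_eq_abs, abs_of_nonneg dist_nonneg, dist_comm, Real.dist_eq]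
  exact hn

variable {P : Measure (Fin d × Word1 M → Bool)} [IsProbabilityMeasure P]

lemma Z_conv (hP : IsBern (fun q : Fin d × Word1 M => p q.1) P)
    (hpM : ∀ i, (p i)⁻¹ ≤ M) (hp0 : ∀ i, 0 < p i) (hp1 : ∀ i, p i ≤ 1)
    (hm : ∀ i, 1 < p i * M) (i : Fin d) :
    ∀ᵐ ω ∂P, ∃ W, Filter.Tendsto (fun n => Z p ω i n) Filter.atTop (nhds W) := by
  have hM0 : (0 : ℝ) < M := Mpos
  have hM1 : (1 : ℝ) ≤ M := by exact_mod_cast Nat.pos_of_neZero M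
  have hpi := hp0 i
  set θ := (p i * M)⁻¹ with hθ
  have hθ0 : 0 < θ := by positivity
  have hθ1 : θ < 1 := inv_lt_one_of_one_lt₀ (hm i)
  obtain ⟨r, hr, hrr⟩ := exists_rr hθ0 hθ1
  have hr0 : 0 < r := by linarith
  obtain ⟨ρ, hρ1, hρ2⟩ := exists_between hr
  have hBC := bc_dev (K := M) hP (fun q => hp0 q.1) (fun q => hp1 q.1) (fun q => hpM q.1)
    (fun n => TT M i n) (fun n => {0})
    (fun n k q ω => (zw p ω i n q.2).toReal)
    (fun n k q => dep_meas fun ω ω' h => by rw [zw_congr h])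
    (fun n k q _ => dep_TT fun ω ω' h => by rw [zw_congr h]) hθ0 hr zero_lt_one
    (C := 1) (fun n => by simp)
  filter_upwards [hBC] with ω hω
  have hstep : ∀ᶠ n in Filter.atTop, ∀ G : ℝ, Z p ω i n ≤ G →
      |Z p ω i (n + 1) - Z p ω i n| ≤ (M : ℝ) ^ 2 * ((r⁻¹) ^ n * G + (θ * r ^ 2) ^ n) := by
    filter_upwards [hω] with n hn G hG
    have h1 := hn 0 (by simp)
    rw [← Z_diff hp0] at h1
    refine h1.trans ?_
    have hv : vv M p i n ≤ θ ^ n := by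
      unfold vv
      rw [hθ, inv_pow, mul_pow]
      refine inv_anti₀ (by positivity) ?_
      gcongr
      omega
    have h2 : ∑ q ∈ TT M i n, (zw p ω i n q.2).toReal ^ 2 ≤ θ ^ n * G := by
      rw [TT, Finset.sum_map]
      calc _ ≤ ∑ w ∈ WW M n, θ ^ n * (zw p ω i n w).toReal := by
            refine Finset.sum_le_sum fun w hw => ?_
            simp only [Function.Embedding.sectR_apply]
            rw [sq]
            gcongr
            rw [zw_eq hp0 hw, ENNReal.toReal_mul, ENNReal.toReal_ofReal (vv_pos hp0).le]
            refine le_trans ?_ hv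
            refine mul_le_of_le_one_left (vv_pos hp0).le ?_
            simpa using bb_le (p := p) (ω := ω) (i := i) (n := n) w
        _ ≤ _ := by
            rw [← Finset.mul_sum, ← ENNReal.toReal_sum (fun w hw => by
              rw [zw_eq hp0 hw]; exact ENNReal.mul_ne_top (by simp) (by simp)), ← mass_sum]
            gcongr
            exact hG
    calc _ ≤ (M : ℝ) ^ 2 * ((θ * r)⁻¹) ^ n * (θ ^ n * G) + (θ * r ^ 2) ^ n := by gcongr
      _ = (M : ℝ) ^ 2 * ((r⁻¹) ^ n * G) + (θ * r ^ 2) ^ n := by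
          rw [mul_inv, mul_pow, inv_pow θ]
          field_simp
      _ ≤ _ := by
          rw [mul_add]
          gcongr
          exact le_mul_of_one_le_left (by positivity) (one_le_pow₀ hM1)
  obtain ⟨C, hC⟩ := growth_det (f := fun n _ => Z p ω i n) (A := (M : ℝ) ^ 2) (by positivity) hr hρ1
    (by
      filter_upwards [hstep] with n hn G hG _
      refine (hn G (hG 0)).trans ?_
      have : θ * r ^ 2 ≤ ρ := by linarith
      gcongr) (fun n => ⟨_, fun _ => le_rfl⟩)
  refine tendsto_of_geom (A := (M : ℝ) ^ 2 * (|C| + 1)) (q := max (ρ / r) (θ * r ^ 2))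
    (le_max_of_le_right (by positivity)) (max_lt ((div_lt_one hr0).2 hρ2) hrr) ?_
  filter_upwards [hstep, hC] with n h1 h2
  refine (h1 (C * ρ ^ n) (h2 0)).trans ?_
  rw [mul_assoc]
  gcongr
  set q := max (ρ / r) (θ * r ^ 2)
  have e1 : (r⁻¹) ^ n * (C * ρ ^ n) = C * (ρ / r) ^ n := by rw [div_pow, inv_pow]; ring
  rw [e1, add_mul, one_mul]
  have hq1 : (ρ / r) ^ n ≤ q ^ n := by gcongr; exact le_max_left _ _
  have hq2 : (θ * r ^ 2) ^ n ≤ q ^ n := by gcongr; exact le_max_right _ _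
  have : C * (ρ / r) ^ n ≤ |C| * (ρ / r) ^ n := by gcongr; exact le_abs_self C
  have : |C| * (ρ / r) ^ n ≤ |C| * q ^ n := by gcongr
  linarith

end mass

section psi

/-- conjugated offspring generating function -/
def psi (c : ℝ) (M : ℕ) (x : ℝ) : ℝ := c * (1 - (1 - x) ^ M)

variable {c : ℝ} {M : ℕ}

lemma psi_mem (h0 : 0 < c) (h1 : c ≤ 1) {x : ℝ} (hx : x ∈ Icc (0 : ℝ) 1) :
    psi c M x ∈ Icc (0 : ℝ) 1 := by
  have h2 : (1 - x) ^ M ≤ 1 := pow_le_one₀ (by linarith [hx.2]) (by linarith [hx.1])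
  have h3 : 0 ≤ (1 - x) ^ M := pow_nonneg (by linarith [hx.2]) _
  unfold psi
  constructor
  · exact mul_nonneg h0.le (by linarith)
  · nlinarith

lemma psi_mono (h0 : 0 < c) {x y : ℝ} (hy : y ≤ 1) (hxy : x ≤ y) :
    psi c M x ≤ psi c M y := by
  unfold psi
  have : (1 - y) ^ M ≤ (1 - x) ^ M := pow_le_pow_left₀ (by linarith) (by linarith) _
  gcongr

lemma psi_iter_mem (h0 : 0 < c) (h1 : c ≤ 1) (k : ℕ) {x : ℝ} (hx : x ∈ Icc (0 : ℝ) 1) :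
    (psi c M)^[k] x ∈ Icc (0 : ℝ) 1 := by
  induction k with
  | zero => exact hx
  | succ k ih => rw [Function.iterate_succ_apply']; exact psi_mem h0 h1 ih

lemma psi_iter_mono (h0 : 0 < c) (h1 : c ≤ 1) (k : ℕ) {x y : ℝ} (hy : y ∈ Icc (0 : ℝ) 1)
    (hxy : x ≤ y) : (psi c M)^[k] x ≤ (psi c M)^[k] y := by
  induction k with
  | zero => exact hxy
  | succ k ih =>
    rw [Function.iterate_succ_apply', Function.iterate_succ_apply']
    exact psi_mono h0 (psi_iter_mem h0 h1 k hy).2 ih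

lemma bern_aux {x : ℝ} (hx : x ∈ Icc (0 : ℝ) 1) : (1 - x) ^ M * (1 + M * x) ≤ 1 := by
  have h1 : 1 + M * x ≤ (1 + x) ^ M := one_add_mul_le_pow (by linarith [hx.1]) M
  have h3 : 0 ≤ (1 - x) ^ M := pow_nonneg (by linarith [hx.2]) _
  calc (1 - x) ^ M * (1 + M * x) ≤ (1 - x) ^ M * (1 + x) ^ M := by gcongr
    _ = (1 - x ^ 2) ^ M := by rw [← mul_pow]; congr 1; ring
    _ ≤ 1 := pow_le_one₀ (by nlinarith [hx.1, hx.2]) (by nlinarith [hx.1])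

/-- comparison function -/
def hh (A u : ℝ) : ℝ := u / (1 + A * u)

lemma psi_h {A : ℝ} (h0 : 0 < c) (hA : A * (c * M - 1) = M) (hA1 : 1 ≤ A) {u : ℝ} (hu : 0 ≤ u) :
    hh A (c * M * u) ≤ psi c M (hh A u) := by
  have hM : (0 : ℝ) ≤ M := by positivity
  have hd : 0 < 1 + A * u := by positivity
  set x := hh A u with hxd
  have hx : x ∈ Icc (0 : ℝ) 1 := by
    refine ⟨by rw [hxd, hh]; positivity, ?_⟩
    rw [hxd, hh, div_le_one hd]; nlinarith
  have hb := bern_aux (M := M) hx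
  have hx1 : 0 < 1 + M * x := by have := hx.1; positivity
  have hge : c * (M * x / (1 + M * x)) ≤ psi c M x := by
    unfold psi
    gcongr
    rw [div_le_iff₀ hx1]
    nlinarith
  refine le_trans (le_of_eq ?_) hge
  have e1 : 1 + M * x = (1 + A * (c * M * u)) / (1 + A * u) := by
    rw [hxd, hh]; field_simp
    linear_combination (-u) * hA
  have hd2 : 0 < 1 + A * (c * M * u) := by positivity
  rw [e1, hxd]
  unfold hh
  field_simp

lemma hh_mem {A u : ℝ} (hA1 : 1 ≤ A) (hu : 0 ≤ u) : hh A u ∈ Icc (0 : ℝ) 1 := by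
  have hd : 0 < 1 + A * u := by positivity
  refine ⟨by rw [hh]; positivity, ?_⟩
  rw [hh, div_le_one hd]; nlinarith

lemma psi_iter_h {A : ℝ} (h0 : 0 < c) (h1 : c ≤ 1) (hA : A * (c * M - 1) = M) (hA1 : 1 ≤ A)
    (j : ℕ) {u : ℝ} (hu : 0 ≤ u) : hh A ((c * M) ^ j * u) ≤ (psi c M)^[j] (hh A u) := by
  induction j with
  | zero => simp
  | succ j ih =>
    rw [Function.iterate_succ_apply', pow_succ', mul_assoc]
    refine (psi_h h0 hA hA1 (by positivity)).trans (psi_mono h0 ?_ ih)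
    exact (psi_iter_mem h0 h1 j (hh_mem hA1 hu)).2

lemma one_sub_exp_ge {A x : ℝ} (hA1 : 1 ≤ A) (hx : 0 ≤ x) : hh A x ≤ 1 - Real.exp (-x) := by
  have h1 := Real.add_one_le_exp x
  have h2 : Real.exp (-x) ≤ 1 / (1 + x) := by
    rw [Real.exp_neg, ← one_div]
    exact one_div_le_one_div_of_le (by linarith) (by linarith)
  have h3 : hh A x ≤ x / (1 + x) := by
    unfold hh
    gcongr
    nlinarith
  have h4 : x / (1 + x) = 1 - 1 / (1 + x) := by field_simp; ring
  linarith

lemma psi_cont : Continuous (psi c M) := by unfold psi; fun_prop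

lemma psi_fix_unique (hM : 2 ≤ M) (h0 : 0 < c) {x y : ℝ} (hx0 : 0 < x) (hy : y ≤ 1)
    (hx : psi c M x = x) (hy' : psi c M y = y) (hxy : x ≤ y) : x = y := by
  by_contra hne
  have hlt : x < y := lt_of_le_of_ne hxy hne
  have key : ∀ z : ℝ, psi c M z = z → z ≠ 0 → c * ∑ j ∈ Finset.range M, (1 - z) ^ j = 1 := by
    intro z hz hz0
    have h := mul_neg_geom_sum (1 - z) M
    rw [_root_.sub_sub_cancel] at h
    unfold psi at hz
    rw [← h] at hz
    have : z * (c * ∑ j ∈ Finset.range M, (1 - z) ^ j) = z * 1 := by linarith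
    exact mul_left_cancel₀ hz0 this
  have k1 := key x hx hx0.ne'
  have k2 := key y hy' (by linarith)
  have : ∑ j ∈ Finset.range M, (1 - y) ^ j < ∑ j ∈ Finset.range M, (1 - x) ^ j := by
    refine Finset.sum_lt_sum (fun j _ => ?_) ⟨1, Finset.mem_range.2 (by omega), ?_⟩
    · exact pow_le_pow_left₀ (by linarith) (by linarith) _
    · simpa using hlt
  nlinarith

lemma psi_limits {A : ℝ} (hM : 2 ≤ M) (h0 : 0 < c) (h1 : c ≤ 1) (hm : 1 < c * M)
    (hA : A * (c * M - 1) = M) (hA1 : 1 ≤ A) : ∃ x : ℝ,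
    Filter.Tendsto (fun k => (psi c M)^[k] (hh A 1)) Filter.atTop (nhds x) ∧
    Filter.Tendsto (fun k => (psi c M)^[k] 1) Filter.atTop (nhds x) := by
  have hmem := hh_mem (A := A) (u := 1) hA1 zero_le_one
  have hpos : 0 < hh A 1 := by unfold hh; positivity
  have one_mem : (1 : ℝ) ∈ Icc (0 : ℝ) 1 := by simp
  have hup : hh A 1 ≤ psi c M (hh A 1) := by
    refine le_trans ?_ (psi_h h0 hA hA1 zero_le_one)
    unfold hh
    rw [div_le_div_iff₀ (by positivity) (by positivity)]
    nlinarith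
  have m1 : Monotone fun k => (psi c M)^[k] (hh A 1) := by
    refine monotone_nat_of_le_succ fun k => ?_
    rw [Function.iterate_succ_apply]
    exact psi_iter_mono h0 h1 k (psi_mem h0 h1 hmem) hup
  have m2 : Antitone fun k => (psi c M)^[k] 1 := by
    refine antitone_nat_of_succ_le fun k => ?_
    rw [Function.iterate_succ_apply]
    exact psi_iter_mono h0 h1 k one_mem (psi_mem h0 h1 one_mem).2
  have t1 := tendsto_atTop_ciSup m1 ⟨1, by rintro _ ⟨k, rfl⟩; exact (psi_iter_mem h0 h1 k hmem).2⟩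
  have t2 := tendsto_atTop_ciInf m2 ⟨0, by rintro _ ⟨k, rfl⟩; exact (psi_iter_mem h0 h1 k one_mem).1⟩
  set x1 := ⨆ k, (psi c M)^[k] (hh A 1)
  set x2 := ⨅ k, (psi c M)^[k] 1
  have f1 : psi c M x1 = x1 := isFixedPt_of_tendsto_iterate t1 psi_cont.continuousAt
  have f2 : psi c M x2 = x2 := isFixedPt_of_tendsto_iterate t2 psi_cont.continuousAt
  have h12 : x1 ≤ x2 := le_of_tendsto_of_tendsto' t1 t2 fun k =>
    psi_iter_mono h0 h1 k one_mem hmem.2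
  have hx1 : 0 < x1 := hpos.trans_le (ge_of_tendsto' t1 fun k => m1 (Nat.zero_le k))
  have hx2 : x2 ≤ 1 := le_of_tendsto' t2 fun k => (psi_iter_mem h0 h1 k one_mem).2
  have := psi_fix_unique hM h0 hx1 hx2 f1 f2 h12
  exact ⟨x1, t1, this ▸ t2⟩
end psi

section ext
variable {d M : ℕ} [NeZero M] {p : Fin d → ℝ} 
variable {P : Measure (Fin d × Word1 M → Bool)} [IsProbabilityMeasure P]

lemma laplace (hP : IsBern (fun q : Fin d × Word1 M => p q.1) P)
    (hp0 : ∀ i, 0 < p i) (hp1 : ∀ i, p i ≤ 1) (i : Fin d) (n : ℕ) : ∀ s ∈ Icc (0 : ℝ) 1,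
    ∫⁻ ω, ENNReal.ofReal s ^ NN p ω i n ∂P = ENNReal.ofReal ((1 - (psi (p i) M)^[n] (1 - s)) ^ M) := by
  induction n with
  | zero =>
    intro s hs
    simp_rw [NN_zero hp0]
    simp [ENNReal.ofReal_pow hs.1]
  | succ n ih =>
    intro s hs
    have hpi := hp0 i
    have hpi1 := hp1 i
    have hf : 1 - psi (p i) M (1 - s) ∈ Icc (0 : ℝ) 1 := by
      have := psi_mem (M := M) (hp0 i) (hp1 i) (x := 1 - s) ⟨by linarith [hs.2], by linarith [hs.1]⟩
      exact ⟨by linarith [this.2], by linarith [this.1]⟩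
    have h1 := ih _ hf
    rw [_root_.sub_sub_cancel, ← Function.iterate_succ_apply] at h1
    rw [← h1]
    set S := ENNReal.ofReal s
    have e1 : ∀ ω : Fin d × Word1 M → Bool, S ^ NN p ω i (n + 1) =
        ∏ q ∈ TT M i n, (fun (q : Fin d × Word1 M) (b : Bool) (ω : Fin d × Word1 M → Bool) =>
          if b then S ^ (M * bb p ω i n q.2) else 1) q (ω q) ω := by
      intro ω
      rw [NN_succ hp0, TT, Finset.prod_map, Finset.mul_sum, ← Finset.prod_pow_eq_pow_sum]
      refine Finset.prod_congr rfl fun w _ => ?_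
      simp only [Function.Embedding.sectR_apply]
      split_ifs <;> simp
    rw [lintegral_congr e1, integrate_out hP (fun q => (hp0 q.1).le) (fun q => hp1 q.1) (TT M i n)
      (fun (q : Fin d × Word1 M) (b : Bool) (ω : Fin d × Word1 M → Bool) =>
          if b then S ^ (M * bb p ω i n q.2) else 1)]
    · refine lintegral_congr fun ω => ?_
      rw [TT, Finset.prod_map, NN, ← Finset.prod_pow_eq_pow_sum]
      refine Finset.prod_congr rfl fun w _ => ?_
      simp only [Function.Embedding.sectR_apply, if_true, Bool.false_eq_true, if_false, mul_one]
      have hb := bb_le (p := p) (ω := ω) (i := i) (n := n) w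
      have h01 : bb p ω i n w = 0 ∨ bb p ω i n w = 1 := by omega
      rcases h01 with h | h
      · rw [h, mul_zero, pow_zero, pow_zero, mul_one, ← ENNReal.ofReal_add hpi.le (by linarith)]
        simp
      · rw [h, mul_one, pow_one, ← ENNReal.ofReal_pow hs.1, ← ENNReal.ofReal_mul hpi.le,
          ← ENNReal.ofReal_add (mul_nonneg hpi.le (pow_nonneg hs.1 _)) (by linarith)]
        congr 1
        unfold psi
        rw [_root_.sub_sub_cancel]; ring
    · intro q b
      refine dep_meas (i := i) (n := n) fun ω ω' h => ?_
      simp only [bb_congr h]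
    · intro q _ b
      refine dep_TT (i := i) (n := n) fun ω ω' h => ?_
      simp only [bb_congr h]

lemma NN_dead (hp0 : ∀ i, 0 < p i) {ω : Fin d × Word1 M → Bool} {i : Fin d} {k n : ℕ} (hkn : k ≤ n)
    (hk : NN p ω i k = 0) : NN p ω i n = 0 := by
  induction n, hkn using Nat.le_induction with
  | base => exact hk
  | succ n _ ih =>
    rw [NN_succ hp0, Finset.sum_eq_zero, mul_zero]
    intro w hw
    rw [NN, Finset.sum_eq_zero_iff] at ih
    simp [ih w hw]

lemma Z_lim_pos (hM : 2 ≤ M) (hP : IsBern (fun q : Fin d × Word1 M => p q.1) P)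
    (hp0 : ∀ i, 0 < p i) (hp1 : ∀ i, p i ≤ 1) (hm : ∀ i, 1 < p i * M) (i : Fin d) :
    ∀ᵐ ω ∂P, Filter.Tendsto (fun n => Z p ω i n) Filter.atTop (nhds 0) → ∃ k, NN p ω i k = 0 := by
  have hM0 : (0 : ℝ) < M := Mpos
  have hpi := hp0 i
  have hpi1 := hp1 i
  have hmi := hm i
  set c := p i with hc
  set A : ℝ := M / (c * M - 1) with hAd
  have hA : A * (c * M - 1) = M := div_mul_cancel₀ _ (by linarith)
  have hA1 : 1 ≤ A := by
    rw [hAd, one_le_div (by linarith)]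
    nlinarith
  obtain ⟨x, t1, t2⟩ := psi_limits hM hpi hpi1 hmi hA hA1
  set SA : Set (Fin d × Word1 M → Bool) :=
    {ω | Filter.Tendsto (fun n => Z p ω i n) Filter.atTop (nhds 0)} with hSA
  set SB : Set (Fin d × Word1 M → Bool) := {ω | ∃ k, NN p ω i k = 0} with hSB
  have hmeas : MeasurableSet SB := by
    have : SB = ⋃ k, (fun ω => NN p ω i k) ⁻¹' {0} := by
      ext ω; simp [hSB]
    rw [this]
    exact MeasurableSet.iUnion fun k => measurable_NN (measurableSet_singleton 0)
  have hBA : SB ⊆ SA := by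
    rintro ω ⟨k, hk⟩
    refine tendsto_const_nhds.congr' ?_
    filter_upwards [Filter.eventually_ge_atTop k] with n hn
    rw [Z_eq hp0, NN_dead hp0 hn hk]; simp
  have hBge : ENNReal.ofReal ((1 - x) ^ M) ≤ P SB := by
    have ht : Filter.Tendsto (fun k => ENNReal.ofReal ((1 - (psi c M)^[k] 1) ^ M)) Filter.atTop
        (nhds (ENNReal.ofReal ((1 - x) ^ M))) :=
      ENNReal.tendsto_ofReal ((t2.const_sub 1).pow M)
    refine le_of_tendsto' ht fun k => ?_
    have h := laplace hP hp0 hp1 i k 0 (by simp)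
    rw [sub_zero] at h
    rw [← h]
    calc ∫⁻ ω, ENNReal.ofReal 0 ^ NN p ω i k ∂P ≤ ∫⁻ ω, SB.indicator 1 ω ∂P := by
          refine lintegral_mono fun ω => ?_
          by_cases hk : NN p ω i k = 0
          · rw [Set.indicator_of_mem (show ω ∈ SB from ⟨k, hk⟩)]; simp [hk]
          · simp [hk]
      _ = P SB := lintegral_indicator_one hmeas
  have hAle : P SA ≤ ENNReal.ofReal ((1 - x) ^ M) := by
    have ht : Filter.Tendsto (fun k => ENNReal.ofReal ((1 - (psi c M)^[k] (hh A 1)) ^ M))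
        Filter.atTop (nhds (ENNReal.ofReal ((1 - x) ^ M))) :=
      ENNReal.tendsto_ofReal ((t1.const_sub 1).pow M)
    refine ge_of_tendsto' ht fun k => ?_
    set lam : ℝ := M * (c * M) ^ k
    set F : ℕ → (Fin d × Word1 M → Bool) → ℝ≥0∞ :=
      fun n ω => ENNReal.ofReal (Real.exp (-(lam * Z p ω i n)))
    have hFm : ∀ n, Measurable (F n) := fun n =>
      dep_meas (i := i) (n := n) fun ω ω' h => by simp only [F, Z_congr h]
    have hF : ∀ n ≥ k, ∫⁻ ω, F n ω ∂P ≤ ENNReal.ofReal ((1 - (psi c M)^[k] (hh A 1)) ^ M) := by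
      intro n hn
      set y : ℝ := (c * M) ^ k / (c * M) ^ n
      have hy0 : 0 ≤ y := by positivity
      have e : ∀ ω, F n ω = ENNReal.ofReal (Real.exp (-y)) ^ NN p ω i n := by
        intro ω
        rw [← ENNReal.ofReal_pow (Real.exp_pos _).le, ← Real.exp_nat_mul]
        simp only [F]
        congr 2
        rw [Z_eq hp0, vv]
        simp only [lam, y]
        rw [← hc, mul_pow, mul_pow]
        field_simp
        ring
      simp_rw [e]
      have hs : Real.exp (-y) ∈ Icc (0 : ℝ) 1 :=
        ⟨(Real.exp_pos _).le, Real.exp_le_one_iff.2 (by linarith)⟩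
      rw [laplace hP hp0 hp1 i n _ hs, ← hc]
      have hs' : 1 - Real.exp (-y) ∈ Icc (0 : ℝ) 1 := ⟨by linarith [hs.2], by linarith [hs.1]⟩
      have h2 : (psi c M)^[k] (hh A 1) ≤ (psi c M)^[n] (1 - Real.exp (-y)) := by
        obtain ⟨j, rfl⟩ := Nat.exists_eq_add_of_le hn
        rw [Function.iterate_add_apply]
        refine psi_iter_mono hpi hpi1 k (psi_iter_mem hpi hpi1 j hs') ?_
        refine le_trans ?_ (psi_iter_mono hpi hpi1 j hs' (one_sub_exp_ge hA1 hy0))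
        refine le_trans (le_of_eq ?_) (psi_iter_h hpi hpi1 hA hA1 j hy0)
        congr 1
        simp only [y]
        rw [pow_add]
        field_simp
      refine ENNReal.ofReal_le_ofReal ?_
      have := (psi_iter_mem (M := M) hpi hpi1 n hs').2
      gcongr
    calc P SA ≤ P {ω | 1 ≤ Filter.liminf (fun n => F n ω) Filter.atTop} := by
          refine measure_mono fun ω hω => ?_
          have : Filter.Tendsto (fun n => F n ω) Filter.atTop (nhds 1) := by
            have h3 : Filter.Tendsto (fun n => F n ω) Filter.atTop
                (nhds (ENNReal.ofReal (Real.exp (-(lam * 0))))) :=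
              ENNReal.tendsto_ofReal ((Real.continuous_exp.tendsto _).comp
                ((Filter.Tendsto.const_mul lam hω).neg))
            simpa using h3
          rw [Set.mem_ofPred_eq, this.liminf_eq]
      _ ≤ ∫⁻ ω, Filter.liminf (fun n => F n ω) Filter.atTop ∂P := by
          have := mul_meas_ge_le_lintegral₀ (μ := P)
            (Measurable.liminf hFm).aemeasurable 1
          simpa using this
      _ ≤ Filter.liminf (fun n => ∫⁻ ω, F n ω ∂P) Filter.atTop := lintegral_liminf_le hFm
      _ ≤ _ := by
          refine Filter.liminf_le_of_frequently_le' ?_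
          exact (Filter.eventually_atTop.2 ⟨k, hF⟩).frequently
  have heq := ae_eq_of_subset_of_measure_ge hBA (hAle.trans hBge) hmeas.nullMeasurableSet
    (measure_ne_top P _)
  filter_upwards [heq.mem_iff] with ω hω h
  exact hω.2 h
end ext

section final

variable {d M : ℕ} [NeZero M] {p a : Fin d → ℝ} {ω : Fin d × Word1 M → Bool} {i : Fin d} {n : ℕ}

lemma mem_approx {x : ℝ} (h : phi p ω i n x ≠ 0) : x ∈ approx1 M (fun w => ω (i, w)) n := by
  obtain ⟨hx, hk⟩ := phi_ne_zero h
  unfold approx1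
  refine Set.mem_biUnion (x := wd M x n) ?_ (cell_subset_interval1 _ ?_)
  · refine ⟨by simp, ?_⟩
    intro u hu hpre
    have h1 : u = wd M x u.length := by
      have hle := hpre.length_le
      rw [length_wd] at hle
      rw [← wd_take x hle]
      exact List.prefix_iff_eq_take.1 hpre
    have hle := hpre.length_le
    rw [length_wd] at hle
    obtain ⟨k, hk'⟩ : ∃ k, u.length = k + 1 :=
      ⟨u.length - 1, by have := List.length_pos_iff.2 hu; omega⟩
    have := hk k (by omega)
    rw [← this]
    congr 2
    rw [← hk']; exact h1
  · exact ⟨hx, by simp⟩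

lemma NN_ne_zero_of_limit (hp0 : ∀ i, 0 < p i) (h : limit1 M (fun w => ω (i, w)) ≠ ∅) (n : ℕ) :
    NN p ω i n ≠ 0 := by
  intro h0
  obtain ⟨x, hx⟩ := Set.nonempty_iff_ne_empty.2 h
  rcases Nat.eq_zero_or_pos n with rfl | hn
  · rw [NN_zero hp0] at h0
    exact NeZero.ne M h0
  have hx1 : x ∈ approx1 M (fun w => ω (i, w)) n := by
    have := Set.mem_iInter₂.1 hx n hn
    exact this
  unfold approx1 at hx1
  obtain ⟨w, ⟨hwl, hwr⟩, -⟩ := Set.mem_iUnion₂.1 hx1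
  have hcell : ∀ y ∈ cell M w, phi p ω i n y ≠ 0 := by
    rintro y ⟨hy, hyw⟩
    rw [phi, Set.indicator_of_mem hy, Finset.prod_ne_zero_iff]
    intro k hk
    have hk := Finset.mem_range.1 hk
    have : ω (i, wdW M y k) = true := by
      refine hwr (wd M y (k + 1)) _ ?_
      rw [← hyw, ← wd_take y (show k + 1 ≤ w.length by omega)]
      exact List.take_prefix _ _
    unfold xi
    rw [if_pos this]
    simpa using hp0 i
  have hmass0 := mass_eq (ω := ω) (i := i) (n := n) hp0
  rw [h0] at hmass0
  simp only [Nat.cast_zero, zero_mul] at hmass0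
  rw [lintegral_eq_zero_iff measurable_phi] at hmass0
  have hvol : volume (cell M w) = 0 := by
    refine measure_mono_null (fun y hy => ?_) hmass0
    exact hcell y hy
  rw [cell_eq, Real.volume_Ico] at hvol
  have hM0 : (0 : ℝ) < M := Mpos
  have : (0 : ℝ) < ((M : ℝ) ^ w.length)⁻¹ := by positivity
  rw [ENNReal.ofReal_eq_zero] at hvol
  linarith

lemma approx1_anti (θ : Perc1 M) (n : ℕ) : approx1 M θ (n + 1) ⊆ approx1 M θ n := by
  intro x hx
  unfold approx1 at *
  obtain ⟨w, ⟨hwl, hwr⟩, hx⟩ := Set.mem_iUnion₂.1 hx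
  rcases List.eq_nil_or_concat w with rfl | ⟨u, j, rfl⟩
  · simp at hwl
  rw [List.concat_eq_append] at *
  refine Set.mem_biUnion (x := u) ⟨by simpa using hwl, ?_⟩ ?_
  · intro v hv hvp
    exact hwr v hv (hvp.trans (List.prefix_append _ _))
  · unfold interval1 at *
    rw [base1_append] at hx
    have hM0 : (0 : ℝ) < M := Mpos
    have hj : ((j : ℕ) : ℝ) + 1 ≤ M := by exact_mod_cast j.2
    have hz : (M : ℝ) ^ (-(u.length : ℤ)) = M * (M : ℝ) ^ (-(u.length : ℤ) - 1) := by
      rw [zpow_sub₀ hM0.ne', zpow_one]; field_simp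
    have hl : (-(((u ++ [j]).length : ℕ) : ℤ)) = -(u.length : ℤ) - 1 := by
      simp; ring
    rw [hl] at hx
    have hq : 0 < (M : ℝ) ^ (-(u.length : ℤ) - 1) := by positivity
    have hj0 : (0 : ℝ) ≤ ((j : ℕ) : ℝ) := by positivity
    refine ⟨?_, ?_⟩
    · have := hx.1
      have := mul_nonneg hj0 hq.le
      linarith
    · have := hx.2
      rw [hz]
      nlinarith

lemma approx1_compact (θ : Perc1 M) (n : ℕ) : IsCompact (approx1 M θ n) := by
  unfold approx1
  refine Set.Finite.isCompact_biUnion ?_ fun w _ => isCompact_Icc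
  exact (List.finite_length_eq (Fin M) n).subset fun w hw => hw.1

lemma sum_compact (θ : Fin d → Perc1 M) (t : ℝ) (m : ℕ)
    (h : ∀ n ≥ m, ∃ e : Fin d → ℝ, (∀ i, e i ∈ approx1 M (θ i) n) ∧ t = ∑ i, a i * e i) :
    ∃ e : Fin d → ℝ, (∀ i, e i ∈ limit1 M (θ i)) ∧ t = ∑ i, a i * e i := by
  let K : ℕ → Set (Fin d → ℝ) := fun n =>
    (Set.univ.pi fun i => approx1 M (θ i) (m + n)) ∩ {e | ∑ i, a i * e i = t}
  have hcl : IsClosed {e : Fin d → ℝ | ∑ i, a i * e i = t} :=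
    isClosed_eq (by fun_prop) continuous_const
  have hK : ∀ n, IsCompact (K n) := fun n =>
    (isCompact_univ_pi fun i => approx1_compact (θ i) (m + n)).inter_right hcl
  have hne : (⋂ n, K n).Nonempty := by
    refine IsCompact.nonempty_iInter_of_sequence_nonempty_isCompact_isClosed K ?_ ?_ (hK 0)
      (fun n => (hK n).isClosed)
    · rintro n e ⟨h1, h2⟩
      exact ⟨fun i hi => approx1_anti _ _ (h1 i hi), h2⟩
    · intro n
      obtain ⟨e, h1, h2⟩ := h (m + n) (by omega)
      exact ⟨e, fun i _ => h1 i, h2.symm⟩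
  obtain ⟨e, he⟩ := hne
  have he := Set.mem_iInter.1 he
  refine ⟨e, fun i => ?_, (he 0).2.symm⟩
  unfold limit1
  refine Set.mem_iInter₂.2 fun n _ => ?_
  exact antitone_nat_of_succ_le (fun n => approx1_anti (θ i) n) (Nat.le_add_left n m)
    ((he n).1 i (Set.mem_univ _))

lemma lintegral_Fn (ha : ∀ i, a i ≠ 0) : 
    ∫⁻ y, Fn p a ω i n y = ENNReal.ofReal |a i| * ∫⁻ x, phi p ω i n x := by
  have h := Real.map_volume_mul_right (inv_ne_zero (ha i))
  have h2 : ∫⁻ y, Fn p a ω i n y = ∫⁻ x, phi p ω i n x ∂(Measure.map (fun y => y * (a i)⁻¹) volume) := by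
    rw [lintegral_map measurable_phi (show Measurable fun y : ℝ => y * (a i)⁻¹ from measurable_id.mul_const _)]
    rfl
  rw [h2, h, lintegral_smul_measure]
  simp

lemma pos_interval (hd : 2 ≤ d) (ha : ∀ i, a i ≠ 0) (hpM : ∀ i, (p i)⁻¹ ≤ M) (hp0 : ∀ i, 0 < p i)
    {A q : ℝ} (hq0 : 0 ≤ q) (hq1 : q < 1) (hconv : ∀ᶠ n in Filter.atTop, ∀ t,
      |g p a ω (fun _ => n + 1) (List.finRange d) t - g p a ω (fun _ => n) (List.finRange d) t|
        ≤ A * q ^ n) {W : Fin d → ℝ} (hW0 : ∀ i, 0 < W i)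
    (hW : ∀ i, Filter.Tendsto (fun n => Z p ω i n) Filter.atTop (nhds (W i))) :
    ∃ x y : ℝ, x < y ∧ ∃ m, ∀ t ∈ Ioo x y, ∀ n ≥ m, gl p a ω (fun _ => n) (List.finRange d) t ≠ 0 := by
  set l := List.finRange d
  have hlen : l.length = d := List.length_finRange
  have hlne : l ≠ [] := by intro h; rw [h] at hlen; simp at hlen; omega
  have hnd : l.Nodup := List.nodup_finRange d
  set A0 : ℝ := 1 + ∑ i, |a i|
  have hs0 : 0 ≤ ∑ i, |a i| := Finset.sum_nonneg fun i _ => abs_nonneg _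
  have hA1 : 1 ≤ A0 := by simp only [A0]; linarith
  have hAs : ∑ i, |a i| ≤ A0 := by simp only [A0]; linarith
  have hAi : ∀ i, |a i| ≤ A0 := fun i =>
    (Finset.single_le_sum (f := fun j => |a j|) (fun j _ => abs_nonneg _) (Finset.mem_univ i)).trans hAs
  -- total masses
  have hmass : ∀ n, ∫⁻ t, gl p a ω (fun _ => n) l t = ENNReal.ofReal (∏ i, (|a i| * Z p ω i n)) := by
    intro n
    have h0 : ∀ i ∈ Finset.univ, 0 ≤ |a i| * Z p ω i n :=
      fun i _ => mul_nonneg (abs_nonneg _) ENNReal.toReal_nonneg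
    rw [lintegral_gl hlne, ENNReal.ofReal_prod_of_nonneg h0]
    rw [← List.ofFn_eq_map, List.prod_ofFn]
    refine Finset.prod_congr rfl fun i _ => ?_
    rw [lintegral_Fn ha, ENNReal.ofReal_mul (abs_nonneg _), Z, ENNReal.ofReal_toReal (mass_ne_top hp0)]
  set I : ℝ := ∏ i, (|a i| * W i)
  have hI : 0 < I := Finset.prod_pos fun i _ => mul_pos (abs_pos.2 (ha i)) (hW0 i)
  have hlim : Filter.Tendsto (fun n => ∏ i, (|a i| * Z p ω i n)) Filter.atTop (nhds I) :=
    tendsto_finsetProd _ fun i _ => (hW i).const_mul _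
  set c : ℝ := I / (4 * A0)
  have hc : 0 < c := by positivity
  have hc2 : c * (2 * A0) = I / 2 := by simp only [c]; field_simp; ring
  have hbig : ∀ n, I / 2 < ∏ i, (|a i| * Z p ω i n) → ∃ t, c < g p a ω (fun _ => n) l t := by
    intro n hn
    by_contra hcon
    push Not at hcon
    have h1 : ∫⁻ t, gl p a ω (fun _ => n) l t ≤ ENNReal.ofReal (I / 2) := by
      calc ∫⁻ t, gl p a ω (fun _ => n) l t
          ≤ ∫⁻ t, (Icc (-A0) A0).indicator (fun _ => ENNReal.ofReal c) t := by
            refine lintegral_mono fun t => ?_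
            by_cases ht : t ∈ Icc (-A0) A0
            · rw [Set.indicator_of_mem ht, ofReal_g ha hpM]
              exact ENNReal.ofReal_le_ofReal (hcon t)
            · rw [ofReal_g ha hpM, g_supp ha hAs hnd hlne]
              · simp
              · by_contra h'
                exact ht (abs_le.1 (not_lt.1 h'))
        _ = ENNReal.ofReal c * ENNReal.ofReal (2 * A0) := by
            rw [lintegral_indicator_const measurableSet_Icc, Real.volume_Icc]
            congr 2; ring
        _ = ENNReal.ofReal (I / 2) := by rw [← ENNReal.ofReal_mul hc.le, hc2]
    rw [hmass, ENNReal.ofReal_le_ofReal_iff (by positivity)] at h1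
    linarith
  have htail : Filter.Tendsto (fun n => |A| * q ^ n / (1 - q)) Filter.atTop (nhds 0) := by
    have := ((tendsto_pow_atTop_nhds_zero_of_lt_one hq0 hq1).const_mul |A|).div_const (1 - q)
    simpa using this
  obtain ⟨N0, hN0⟩ := Filter.eventually_atTop.1 hconv
  obtain ⟨m, hm1, hm2, hm3⟩ := ((hlim.eventually (lt_mem_nhds (show I / 2 < I by linarith))).and
    ((htail.eventually (gt_mem_nhds (show (0:ℝ) < c / 2 by positivity))).and
      (Filter.eventually_ge_atTop N0))).exists
  have hq1' : 0 < 1 - q := by linarith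
  have hgeo : ∀ j t, |g p a ω (fun _ => m + j) l t - g p a ω (fun _ => m) l t| ≤
      |A| * q ^ m / (1 - q) * (1 - q ^ j) := by
    intro j t
    induction j with
    | zero => simp
    | succ j ih =>
      have h1 := hN0 (m + j) (by omega) t
      have h2 : A * q ^ (m + j) ≤ |A| * q ^ (m + j) := by
        gcongr; exact le_abs_self A
      have h3 := abs_sub_le (g p a ω (fun _ => m + (j + 1)) l t) (g p a ω (fun _ => m + j) l t)
        (g p a ω (fun _ => m) l t)
      have h4 : |A| * q ^ m / (1 - q) * (1 - q ^ (j + 1)) =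
          |A| * q ^ m / (1 - q) * (1 - q ^ j) + |A| * q ^ (m + j) := by
        field_simp
        ring
      rw [h4]
      have h5 : |g p a ω (fun _ => m + (j + 1)) l t - g p a ω (fun _ => m + j) l t| ≤
        A * q ^ (m + j) := h1
      linarith
  obtain ⟨t0, ht0⟩ := hbig m hm1
  obtain ⟨i, l', hl'⟩ := List.exists_cons_of_ne_nil hlne
  have hl'ne : l' ≠ [] := by
    intro h; rw [hl', h] at hlen; simp at hlen; omega
  set G : ℝ := ((M : ℝ) ^ m * A0) ^ l'.length
  have hG0 : 0 ≤ G := by positivity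
  set L : ℝ := (M : ℝ) ^ m * (M : ℝ) ^ m * G
  have hL : 0 ≤ L := by positivity
  have hlip : ∀ t, |g p a ω (fun _ => m) l t - g p a ω (fun _ => m) l t0| ≤ L * |t - t0| := by
    intro t
    rw [hl']
    exact g_lip (lev := fun _ => m) ha hpM hl'ne hG0
      (fun t => g_crude (N := m) hA1 ha hAi hpM (fun _ => le_rfl)) t t0
  set δ : ℝ := c / (2 * (L + 1))
  have hδ : 0 < δ := by positivity
  have hLδ : L * δ ≤ c / 2 := by
    have : (L + 1) * δ = c / 2 := by simp only [δ]; field_simp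
    nlinarith
  refine ⟨t0 - δ, t0 + δ, by linarith, m, fun t ht n hn => ?_⟩
  obtain ⟨j, rfl⟩ := Nat.exists_eq_add_of_le hn
  have h1 := hlip t
  have h2 := hgeo j t
  have h3 : |t - t0| ≤ δ := abs_le.2 ⟨by linarith [ht.1], by linarith [ht.2]⟩
  have h4 : L * |t - t0| ≤ L * δ := by gcongr
  have h5 : |A| * q ^ m / (1 - q) * (1 - q ^ j) ≤ |A| * q ^ m / (1 - q) := by
    have : 0 ≤ |A| * q ^ m / (1 - q) := by positivity
    have : 0 ≤ q ^ j := by positivity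
    nlinarith
  have h6 := (abs_le.1 h1).1
  have h7 := (abs_le.1 h2).1
  have h8 : 0 < g p a ω (fun _ => m + j) l t := by linarith
  intro h0
  simp [g, h0] at h8

end final

/-- joint labeling of all percolations -/
def unc {d M : ℕ} (ω : Fin d → Perc1 M) : Fin d × Word1 M → Bool := fun q => ω q.1 q.2

lemma interval_of_event {d M : ℕ} [NeZero M] {p a : Fin d → ℝ} (hd : 2 ≤ d) (ha : ∀ i, a i ≠ 0)
    (hpM : ∀ i, (p i)⁻¹ ≤ M) (hp0 : ∀ i, 0 < p i) {ω : Fin d → Perc1 M}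
    (h1 : ∃ A q : ℝ, 0 ≤ q ∧ q < 1 ∧ ∀ᶠ n in Filter.atTop, ∀ t,
      |g p a (unc ω) (fun _ => n + 1) (List.finRange d) t
        - g p a (unc ω) (fun _ => n) (List.finRange d) t| ≤ A * q ^ n)
    (hZ : ∀ i, ∃ W, Filter.Tendsto (fun n => Z p (unc ω) i n) Filter.atTop (nhds W))
    (hZ0 : ∀ i, Filter.Tendsto (fun n => Z p (unc ω) i n) Filter.atTop (nhds 0) →
      ∃ k, NN p (unc ω) i k = 0)
    (hN : ∀ i n, NN p (unc ω) i n ≠ 0) :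
      ∃ x y : ℝ, x < y ∧ Set.Ioo x y ⊆
        {s | ∃ e : Fin d → ℝ, (∀ i, e i ∈ limit1 M (ω i)) ∧ s = ∑ i, a i * e i} := by
  obtain ⟨A, q, hq0, hq1, hconv⟩ := h1
  choose W hW using hZ
  have hW0 : ∀ i, 0 < W i := by
    intro i
    have h0 : 0 ≤ W i := ge_of_tendsto' (hW i) fun n => ENNReal.toReal_nonneg
    rcases h0.lt_or_eq with h | h
    · exact h
    · obtain ⟨k, hk⟩ := hZ0 i (by rw [h]; exact hW i)
      exact absurd hk (hN i k)
  obtain ⟨x, y, hxy, m, H⟩ := pos_interval hd ha hpM hp0 hq0 hq1 hconv hW0 hW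
  refine ⟨x, y, hxy, fun t ht => ?_⟩
  refine sum_compact ω t m fun n hn => ?_
  obtain ⟨z, hz1, hz2⟩ := gl_support (List.nodup_finRange d)
    (by intro h; have := congrArg List.length h; simp at this; omega) (H t ht n hn)
  refine ⟨fun i => z i / a i, fun i => mem_approx (hz1 i (List.mem_finRange i)), ?_⟩
  rw [← hz2, ← List.ofFn_eq_map, List.sum_ofFn]
  exact Finset.sum_congr rfl fun i _ => by have := ha i; field_simp

lemma measurable_alive {d M : ℕ} [NeZero M] (p : Fin d → ℝ) :
    MeasurableSet {ω : Fin d → Perc1 M | ∀ i n, NN p (unc ω) i n ≠ 0} := by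
  have hu : Measurable (unc (d := d) (M := M)) := measurable_pi_iff.2 fun q =>
    (measurable_pi_apply q.2).comp (measurable_pi_apply q.1)
  rw [Set.ofPred_forall]
  refine MeasurableSet.iInter fun i => ?_
  rw [Set.ofPred_forall]
  refine MeasurableSet.iInter fun n => ?_
  have h : Measurable fun ω : Fin d → Perc1 M => NN p (unc ω) i n :=
    (measurable_NN (p := p) (i := i) (n := n)).comp hu
  exact (measurableSet_eq_fun h measurable_const).compl

lemma alive_sub {d M : ℕ} [NeZero M] {p : Fin d → ℝ} (hp0 : ∀ i, 0 < p i) :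
    {ω : Fin d → Perc1 M | ∀ i, limit1 M (ω i) ≠ ∅} ⊆
      {ω : Fin d → Perc1 M | ∀ i n, NN p (unc ω) i n ≠ 0} := by
  intro ω hω i n
  have h : limit1 M (ω i) ≠ ∅ := hω i
  exact NN_ne_zero_of_limit (ω := unc ω) (i := i) hp0 h n

/-- if `pᵢ > M⁻¹` for all `i` and `p₁⋯p_d > M^{-(d-1)}`, then for
every vector `a` with nonzero coordinates, conditioned on all `E⁽ⁱ⁾` being
nonempty, almost surely the algebraic sum `a₁E⁽¹⁾ + ⋯ + a_dE⁽ᵈ⁾` contains a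
nonempty open interval. -/
theorem weighted_sum_contains_interval
    (d M : ℕ) (hd : 2 ≤ d) (hM : 2 ≤ M)
    (p : Fin d → ℝ) (hp : ∀ i, ((M : ℝ))⁻¹ < p i) (hp1 : ∀ i, p i ≤ 1)
    (hprod : (M : ℝ) ^ (1 - (d : ℤ)) < ∏ i, p i)
    (P : Measure (Fin d → Perc1 M)) (hP : IsIndepBernoulli1 d M p P)
    (a : Fin d → ℝ) (ha : ∀ i, a i ≠ 0) :
    ∀ᵐ ω ∂(ProbabilityTheory.cond P {ω | ∀ i, limit1 M (ω i) ≠ ∅}),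
      ∃ x y : ℝ, x < y ∧ Set.Ioo x y ⊆
        {s | ∃ e : Fin d → ℝ, (∀ i, e i ∈ limit1 M (ω i)) ∧ s = ∑ i, a i * e i} := by
  have : NeZero M := ⟨by omega⟩
  have := hP.1
  have hM0 : (0 : ℝ) < M := Mpos
  have hp0 : ∀ i, 0 < p i := fun i => (inv_pos.2 hM0).trans (hp i)
  have hpM : ∀ i, (p i)⁻¹ ≤ M := fun i => inv_le_of_inv_le₀ hM0 (hp i).le
  have hm : ∀ i, 1 < p i * M := fun i => by
    have := mul_lt_mul_of_pos_right (hp i) hM0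
    rwa [inv_mul_cancel₀ hM0.ne'] at this
  have hprod' : (M : ℝ) < ((List.finRange d).map fun i => p i * M).prod := by
    rw [← List.ofFn_eq_map, List.prod_ofFn, Finset.prod_mul_distrib]
    simp only [Finset.prod_const, Finset.card_univ, Fintype.card_fin]
    have h1 := mul_lt_mul_of_pos_right hprod (pow_pos hM0 d)
    rwa [zpow_sub₀ hM0.ne', zpow_one, zpow_natCast, div_mul_cancel₀ _ (pow_pos hM0 d).ne'] at h1
  have hΦ : Measurable (unc (d := d) (M := M)) := measurable_pi_iff.2 fun q =>
    (measurable_pi_apply q.2).comp (measurable_pi_apply q.1)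
  have : IsProbabilityMeasure (P.map unc) := Measure.isProbabilityMeasure_map hΦ.aemeasurable
  have hB : IsBern (fun q : Fin d × Word1 M => p q.1) (P.map unc) := by
    intro S b
    rw [Measure.map_apply hΦ]
    · exact hP.2 S b
    · have : {ω : Fin d × Word1 M → Bool | ∀ q ∈ S, ω q = b q} = ⋂ q ∈ S, (fun ω => ω q) ⁻¹' {b q} := by
        ext ω; simp
      rw [this]
      exact Finset.measurableSet_biInter _ fun q _ => measurable_pi_apply q (measurableSet_singleton _)
  have h1 := ae_of_ae_map hΦ.aemeasurable (conv_full (a := a) hB ha hpM hp0 hp1 hm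
    (l := List.finRange d) (by simpa using hd) (List.nodup_finRange d) hprod')
  have h2 := ae_of_ae_map hΦ.aemeasurable (ae_all_iff.2 fun i => Z_conv hB hpM hp0 hp1 hm i)
  have h3 := ae_of_ae_map hΦ.aemeasurable (ae_all_iff.2 fun i => Z_lim_pos hM hB hp0 hp1 hm i)
  have key : ∀ᵐ ω ∂P, ω ∈ {ω : Fin d → Perc1 M | ∀ i n, NN p (unc ω) i n ≠ 0} →
      ∃ x y : ℝ, x < y ∧ Set.Ioo x y ⊆
        {s | ∃ e : Fin d → ℝ, (∀ i, e i ∈ limit1 M (ω i)) ∧ s = ∑ i, a i * e i} := by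
    filter_upwards [h1, h2, h3] with ω hA hZ hZ0 hN
    exact interval_of_event hd ha hpM hp0 hA hZ hZ0 hN
  have hmeas := measurable_alive (d := d) (M := M) p
  have hsub := alive_sub (d := d) (M := M) hp0
  have hres := (ae_restrict_iff' hmeas).2 key
  have hres2 := ae_mono (Measure.restrict_mono hsub le_rfl) hres
  unfold ProbabilityTheory.cond
  exact Measure.ae_smul_measure hres2 _
end
end

section
/- Let d ≥ 2 and M ≥ 2 be integers and let p₁,…,p_d be real numbers with M^{-1} < p_i ≤ 1 for every i and ∏_{i=1}^d p_i > M^{-(d−1)}. Then there exist real numbers q₁,…,q_d such that: ∏_{i=1}^d q_i > M^{-(d−1)}; for every j ∈ {1,…,d}, ∏_{i≠j} q_i < M^{-(d−2)}; and M^{-1} < q_i ≤ p_i for every i. -/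
/-- given `p₁,…,p_d ∈ (M⁻¹, 1]` with `∏ pᵢ > M^{-(d-1)}`, there
are `q₁,…,q_d` with `∏ qᵢ > M^{-(d-1)}`, `∏_{i≠j} qᵢ < M^{-(d-2)}` for every `j`,
and `M⁻¹ < qᵢ ≤ pᵢ` for every `i`. -/
theorem adjusted_probabilities_exist
    (d M : ℕ) (hd : 2 ≤ d) (hM : 2 ≤ M)
    (p : Fin d → ℝ) (hp : ∀ i, ((M : ℝ))⁻¹ < p i) (hp1 : ∀ i, p i ≤ 1)
    (hprod : (M : ℝ) ^ (1 - (d : ℤ)) < ∏ i, p i) :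
    ∃ q : Fin d → ℝ,
      (M : ℝ) ^ (1 - (d : ℤ)) < ∏ i, q i ∧
      (∀ j, ∏ i ∈ Finset.univ.erase j, q i < (M : ℝ) ^ (2 - (d : ℤ))) ∧
      (∀ i, ((M : ℝ))⁻¹ < q i ∧ q i ≤ p i) := by
  have hM1 : (1 : ℝ) < M := by exact_mod_cast hM
  have hM0 : (0 : ℝ) < M := by linarith
  have hm : (0 : ℝ) < (M : ℝ)⁻¹ := inv_pos.mpr hM0
  set m : ℝ := (M : ℝ)⁻¹ with hmdef
  let q : ℝ → Fin d → ℝ := fun t i => m + t * (p i - m)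
  have hq : ∀ t i, q t i = m + t * (p i - m) := fun _ _ => rfl
  have hcont : ∀ s : Finset (Fin d), Continuous (fun t => ∏ i ∈ s, q t i) := by
    intro s
    simp only [hq]
    fun_prop
  have h0 : ∏ i, q 0 i < (M : ℝ) ^ (1 - (d : ℤ)) := by
    have : ∏ i, q 0 i = (M : ℝ) ^ (-(d : ℤ)) := by
      simp [hq, hmdef]
    rw [this]
    exact zpow_lt_zpow_right₀ hM1 (by omega)
  have h1 : (M : ℝ) ^ (1 - (d : ℤ)) < ∏ i, q 1 i := by
    simpa [hq] using hprod
  obtain ⟨t, ⟨ht0, ht1⟩, ht⟩ := intermediate_value_Ioo (zero_le_one (α := ℝ))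
    (hcont Finset.univ).continuousOn ⟨h0, h1⟩
  have ht : ∏ i, q t i = (M : ℝ) ^ (1 - (d : ℤ)) := ht
  have hqm : ∀ s, 0 < s → ∀ i, m < q s i := by
    intro s hs i
    have := mul_pos hs (sub_pos.mpr (hp i))
    rw [hq]; linarith
  have hstep : ∀ j, ∏ i ∈ Finset.univ.erase j, q t i < (M : ℝ) ^ (2 - (d : ℤ)) := by
    intro j
    have hj := hqm t ht0 j
    have e := Finset.prod_erase_mul Finset.univ (q t) (Finset.mem_univ j)
    have e2 : (M : ℝ) ^ (1 - (d : ℤ)) = (M : ℝ) ^ (2 - (d : ℤ)) * m := by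
      rw [hmdef, ← zpow_sub_one₀ hM0.ne']
      congr 1; ring
    have hz : (0 : ℝ) < (M : ℝ) ^ (2 - (d : ℤ)) := zpow_pos hM0 _
    have : (∏ i ∈ Finset.univ.erase j, q t i) * q t j < (M : ℝ) ^ (2 - (d : ℤ)) * q t j := by
      rw [e, ht, e2]
      exact mul_lt_mul_of_pos_left hj hz
    exact lt_of_mul_lt_mul_right this (hm.trans hj).le
  have hev : ∀ᶠ s in nhds t, ∀ j, ∏ i ∈ Finset.univ.erase j, q s i < (M : ℝ) ^ (2 - (d : ℤ)) := by
    rw [Filter.eventually_all]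
    intro j
    exact (hcont _).continuousAt.eventually_lt continuousAt_const (hstep j)
  obtain ⟨s, hs, hst, hs1⟩ := ((hev.filter_mono nhdsWithin_le_nhds).and
    (Ioo_mem_nhdsGT ht1)).exists
  refine ⟨q s, ?_, hs, fun i => ⟨hqm s (ht0.trans hst) i, ?_⟩⟩
  · rw [← ht]
    have hlt : ∀ i, q t i < q s i := by
      intro i
      have := mul_lt_mul_of_pos_right hst (sub_pos.mpr (hp i))
      rw [hq, hq]; linarith
    exact Finset.prod_lt_prod_of_nonempty (fun i _ => hm.trans (hqm t ht0 i))
      (fun i _ => hlt i) ⟨⟨0, by omega⟩, Finset.mem_univ _⟩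
  · have := mul_le_mul_of_nonneg_right hs1.le (sub_pos.mpr (hp i)).le
    rw [hq]; linarith
end
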